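/- Let n=(n₁,n₂,n₃)∈ℤ³ with all nᵢ≥1, let f, f' ∈ V_n, and let △, △' be triangles of G whose closures intersect in an edge of type i for some i∈{1,2,3}; set M = △̂ ∪ △̂' and d(n) = (n₂+n₃−2, n₁+n₃−2, n₁+n₂−2). Then the following are equivalent: (i) the piecewise function equal to f on △ and to f' on △' belongs to S^{d(n)}(M, V_n); (ii) λ_△^β(f) = λ_{△'}^β(f') for every translate β ∈ B_n(△̂) ∩ B_n(△̂'). -/

import Mathlib

/- ## The three-directional (type-I) grid -/

noncomputable section

open MvPolynomial Set Function

/-- Points of the plane. -/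
abbrev Pt := ℝ × ℝ

/-- Bivariate real polynomials `ℝ[x,y]`. -/
abbrev BPoly := MvPolynomial (Fin 2) ℝ

/-- Evaluation of a bivariate polynomial at a point of the plane. -/
def evalP (q : BPoly) (p : Pt) : ℝ := MvPolynomial.eval ![p.1, p.2] q

/-- Triangles of the three-directional grid `G`:  `⟨v, false⟩` is the "lower"
triangle with vertices `v, v+(1,0), v+(1,1)`, and `⟨v, true⟩` is the "upper"
triangle with vertices `v, v+(0,1), v+(1,1)`. -/
structure Tri where
  v : ℤ × ℤ
  up : Bool
deriving DecidableEq

namespace Tri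

/-- The open triangle in the plane realizing a combinatorial triangle. -/
def toSet (T : Tri) : Set Pt :=
  if T.up then
    {p | (T.v.1 : ℝ) < p.1 ∧ p.1 - (T.v.1 : ℝ) < p.2 - (T.v.2 : ℝ) ∧ p.2 < (T.v.2 : ℝ) + 1}
  else
    {p | (T.v.2 : ℝ) < p.2 ∧ p.2 - (T.v.2 : ℝ) < p.1 - (T.v.1 : ℝ) ∧ p.1 < (T.v.1 : ℝ) + 1}

/-- The closed triangle. -/
def cl (T : Tri) : Set Pt := closure T.toSet

/-- The three lattice vertices of a triangle. -/
def vertices (T : Tri) : Finset (ℤ × ℤ) :=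
  if T.up then {T.v, (T.v.1, T.v.2 + 1), (T.v.1 + 1, T.v.2 + 1)}
  else {T.v, (T.v.1 + 1, T.v.2), (T.v.1 + 1, T.v.2 + 1)}

end Tri

/-- Edges of the grid: a lattice point together with a direction type
(`0 ↦ e₁ = (1,0)`, `1 ↦ e₂ = (0,1)`, `2 ↦ e₃ = (1,1)`); the edge of type `i`
at `v` joins `v` to `v + eᵢ`. -/
abbrev Edge := (ℤ × ℤ) × Fin 3

/-- The three direction vectors `e₁, e₂, e₃`. -/
def dirZ : Fin 3 → ℤ × ℤ := ![(1, 0), (0, 1), (1, 1)]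

/-- The three edges of a triangle. -/
def Tri.edges (T : Tri) : Finset Edge :=
  if T.up then {((T.v.1, T.v.2 + 1), 0), (T.v, 1), (T.v, 2)}
  else {(T.v, 0), ((T.v.1 + 1, T.v.2), 1), (T.v, 2)}

/-- The open segment realizing an edge. -/
def Edge.seg (ε : Edge) : Set Pt :=
  {p | ∃ t : ℝ, 0 < t ∧ t < 1 ∧
    p = ((ε.1.1 : ℝ) + t * ((dirZ ε.2).1 : ℝ), (ε.1.2 : ℝ) + t * ((dirZ ε.2).2 : ℝ))}

/-- `M*`: the union of the closed triangles of a multicell domain. -/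
def Mstar (M : Finset Tri) : Set Pt := ⋃ T ∈ M, T.cl

/-- `ℙ(M,V)`: continuous functions on `M*` whose restriction to each triangle
of `M` is the restriction of a polynomial in `V`. -/
def PP (M : Finset Tri) (V : Set BPoly) : Set (Pt → ℝ) :=
  {f | ContinuousOn f (Mstar M) ∧ ∀ T ∈ M, ∃ q ∈ V, EqOn f (evalP q) T.toSet}

/-- The diamond of an edge: union of the closed triangles of `M` having `ε`
as an edge. -/
def diamond (M : Finset Tri) (ε : Edge) : Set Pt :=
  ⋃ T ∈ M.filter (fun T => ε ∈ T.edges), T.cl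

/-- The spline space with edge smoothness `d` on the multicell domain `M`:
piecewise polynomials (pieces from `V`) which are `C^{dᵢ}` on the diamond of
every edge of type `i` of `M`. -/
def SplineSpace (M : Finset Tri) (V : Set BPoly) (d : Fin 3 → ℕ) : Set (Pt → ℝ) :=
  {f | f ∈ PP M V ∧
    ∀ ε : Edge, (∃ T ∈ M, ε ∈ T.edges) → ContDiffOn ℝ (d ε.2) f (diamond M ε)}

/-- Directional derivative of a polynomial along an integer vector. -/
def dirD (e : ℤ × ℤ) (q : BPoly) : BPoly :=
  (e.1 : ℝ) • MvPolynomial.pderiv (0 : Fin 2) q + (e.2 : ℝ) • MvPolynomial.pderiv (1 : Fin 2) q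

/-- The mixed directional derivative operator
`D_s = (∂_{e₁})^{s₁} (∂_{e₂})^{s₂} (∂_{e₃})^{s₃}`. -/
def Dmix (s : Fin 3 → ℕ) (q : BPoly) : BPoly :=
  (dirD (dirZ 0))^[s 0] ((dirD (dirZ 1))^[s 1] ((dirD (dirZ 2))^[s 2] q))

/-- The index sets `Iᵢ^d`; `I₁^d = {s | s₂+s₃ ≤ d₁}` and cyclically. -/
def Iset (d : Fin 3 → ℕ) (i : Fin 3) : Set (Fin 3 → ℕ) :=
  {s | s (i + 1) + s (i + 2) ≤ d i}

/-- Two triangles of the grid are adjacent if they are distinct and share an edge. -/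
def Adj (T T' : Tri) : Prop := T ≠ T' ∧ ∃ ε : Edge, ε ∈ T.edges ∧ ε ∈ T'.edges

/-- `c` is an edge-connected chain of length `m` from `T` to `T'`. -/
def TriIsChain (T T' : Tri) (m : ℕ) (c : ℕ → Tri) : Prop :=
  c 0 = T ∧ c m = T' ∧ ∀ k < m, Adj (c k) (c (k + 1))

/-- The set of types of the edges crossed by a chain. -/
def chainTypes (m : ℕ) (c : ℕ → Tri) : Set (Fin 3) :=
  {i | ∃ k < m, ∃ ε : Edge, ε.2 = i ∧ ε ∈ (c k).edges ∧ ε ∈ (c (k + 1)).edges}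

/-- Minimal length of an edge-connected chain between two triangles. -/
def minLen (T T' : Tri) : ℕ := sInf {m | ∃ c, TriIsChain T T' m c}

/-- The smoothness type `SmType(△,△')`: the types of the edges crossed by a
shortest edge-connected chain from `△` to `△'`. -/
def SmType (T T' : Tri) : Set (Fin 3) :=
  {i | ∃ c, TriIsChain T T' (minLen T T') c ∧ i ∈ chainTypes (minLen T T') c}

/-- `q` is the polynomial piece of `f` on the triangle `T`. -/
def IsPiece (f : Pt → ℝ) (T : Tri) (q : BPoly) : Prop := EqOn f (evalP q) T.toSet

/-- The strongly regular spline space `Ŝ^d(M,V)`: piecewise polynomials such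
that for any two triangles of `M` with intersecting closures, the derivatives
`D_s`, `s ∈ ⋂_{i ∈ SmType(△,△')} Iᵢ^d`, of the two polynomial pieces agree on the
intersection of the closures (i.e. `D_s f` is continuous there). -/
def StrongSpline (M : Finset Tri) (V : Set BPoly) (d : Fin 3 → ℕ) : Set (Pt → ℝ) :=
  {f | f ∈ PP M V ∧
    ∀ T ∈ M, ∀ T' ∈ M, (T.cl ∩ T'.cl).Nonempty →
      ∀ s : Fin 3 → ℕ, (∀ i ∈ SmType T T', s ∈ Iset d i) →
        ∀ q q' : BPoly, IsPiece f T q → IsPiece f T' q' →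
          ∀ x ∈ T.cl ∩ T'.cl, evalP (Dmix s q) x = evalP (Dmix s q') x}

/-- Kissing triangles: the closures intersect in exactly one point. -/
def Kissing (T T' : Tri) : Prop := ∃ p : Pt, T.cl ∩ T'.cl = {p}

/-- An over-concave vertex of `M`: exactly one triangle of `star(ν)` is
missing from `M`. -/
def OverConcave (M : Finset Tri) (ν : ℤ × ℤ) : Prop :=
  ∃! T : Tri, ν ∈ T.vertices ∧ T ∉ M

/- ## Type-I box splines -/

/-- The Courant hat function `B_{(1,1,1)}`: the piecewise linear function on
`G` supported on `star((1,1))` with value `1` at `(1,1)` and `0` at all other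
lattice points. -/
def hat (p : Pt) : ℝ :=
  max 0 (min (min (min p.1 p.2) (min (2 - p.1) (2 - p.2)))
             (min (1 - (p.1 - p.2)) (1 + (p.1 - p.2))))

/-- The type-I box spline `B_{(n₁,n₂,n₃)}`, defined by repeated directional
convolution starting from the Courant hat function (the result is independent
of the order of the convolutions); junk value `0` if some `nᵢ = 0`. -/
noncomputable def boxN : ℕ → ℕ → ℕ → Pt → ℝ
  | 0, _, _, _ => 0
  | _ + 1, 0, _, _ => 0
  | _ + 1, _ + 1, 0, _ => 0
  | 1, 1, 1, p => hat p
  | a + 2, b + 1, c + 1, p =>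
      ∫ t in (0:ℝ)..1, boxN (a + 1) (b + 1) (c + 1) (p.1 - t, p.2)
  | 1, b + 2, c + 1, p =>
      ∫ t in (0:ℝ)..1, boxN 1 (b + 1) (c + 1) (p.1, p.2 - t)
  | 1, 1, c + 2, p =>
      ∫ t in (0:ℝ)..1, boxN 1 1 (c + 1) (p.1 - t, p.2 - t)
  termination_by a b c _ => a + b + c
  decreasing_by all_goals omega

/-- The translate `B_n(· - w)` of the box spline. -/
def trBox (n₁ n₂ n₃ : ℕ) (w : ℤ × ℤ) (p : Pt) : ℝ :=
  boxN n₁ n₂ n₃ (p.1 - (w.1 : ℝ), p.2 - (w.2 : ℝ))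

/-- `Supp_n(△̂)`: lattice translates of `B_n` that do not vanish identically
on the triangle `T`. -/
def activeSet (n₁ n₂ n₃ : ℕ) (T : Tri) : Set (ℤ × ℤ) :=
  {w | ¬ ∀ p ∈ T.toSet, trBox n₁ n₂ n₃ w p = 0}

/-- `c` is the coefficient vector of the polynomial `q` with respect to the
active box-spline translates on `T`:  `q|_T = Σ_β λ_T^β(q)·β|_T`. -/
def Represents (n₁ n₂ n₃ : ℕ) (T : Tri) (q : BPoly) (c : (ℤ × ℤ) →₀ ℝ) : Prop :=
  ↑c.support ⊆ activeSet n₁ n₂ n₃ T ∧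
    ∀ p ∈ T.toSet, evalP q p = c.sum fun w a => a * trBox n₁ n₂ n₃ w p

/-- `V_n` (relative to the triangle `T`): polynomials whose restriction to `T`
is a linear combination of the active box-spline translates on `T`. -/
def VSpace (n₁ n₂ n₃ : ℕ) (T : Tri) : Set BPoly :=
  {q | ∃ c, Represents n₁ n₂ n₃ T q c}

/-!
On each triangle the translates of `B_n` restrict to polynomials, and these pieces obey the
derivative rule `D_s B_n = B_{n - e_s} - B_{n - e_s}(· - e_s)`.  Let `ℓ = 0` be the line through an
edge of type `i`.  Two polynomials glue to a `C^k` function across the edge iff `ℓ ^ (k + 1)`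
divides their difference.  For combinations with the same coefficients on both sides and
`k = d(n)_i` this follows from the derivative rule, by induction on `n`.  Conversely, suppose that
`ℓ ^ (k + 1)` divides the combination of the pieces on one side with coefficients supported on the
common active translates.  By induction the differences of these coefficients vanish, so that they
are a constant `κ`; since the pieces sum to `1`, `ℓ` divides `κ`, hence `κ = 0`.

`V_n` does not depend on the triangle because it is the Dahmen–Micchelli space of the directions:
every element of that space is a combination of the pieces on any given triangle, again by
induction along the derivative rule.
-/

namespace BoxSpline

/-! ### Bivariate polynomials and their directional derivatives -/

section Evaluation

variable (q r : BPoly) (p : Pt)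

@[simp] lemma evalP_zero : evalP 0 p = 0 := map_zero _
@[simp] lemma evalP_one : evalP 1 p = 1 := map_one _
@[simp] lemma evalP_add : evalP (q + r) p = evalP q p + evalP r p := map_add _ _ _
@[simp] lemma evalP_sub : evalP (q - r) p = evalP q p - evalP r p := map_sub _ _ _
@[simp] lemma evalP_neg : evalP (-q) p = -evalP q p := map_neg _ _
@[simp] lemma evalP_mul : evalP (q * r) p = evalP q p * evalP r p := map_mul _ _ _
@[simp] lemma evalP_pow (k : ℕ) : evalP (q ^ k) p = evalP q p ^ k := map_pow _ _ _
@[simp] lemma evalP_C (a : ℝ) : evalP (C a) p = a := eval_C _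
@[simp] lemma evalP_X_zero : evalP (X 0) p = p.1 := eval_X _
@[simp] lemma evalP_X_one : evalP (X 1) p = p.2 := eval_X _
@[simp] lemma evalP_smul (a : ℝ) : evalP (a • q) p = a * evalP q p := smul_eval _ _ _

lemma evalP_sum {ι : Type*} (s : Finset ι) (g : ι → BPoly) :
    evalP (∑ i ∈ s, g i) p = ∑ i ∈ s, evalP (g i) p := map_sum _ _ _

end Evaluation

lemma evalP_coords (q : BPoly) (x : Fin 2 → ℝ) : evalP q (x 0, x 1) = eval x q := by
  rw [evalP, List.ofFn_inj.mp (by rfl : List.ofFn ![x 0, x 1] = List.ofFn x)]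

lemma evalP_injective : Injective evalP := fun q r h ↦
  MvPolynomial.funext fun x ↦ by simpa only [evalP_coords] using congrFun h (x 0, x 1)

lemma eq_of_eqOn_isOpen {q r : BPoly} {U : Set Pt} (hU : IsOpen U) (hne : U.Nonempty)
    (h : EqOn (evalP q) (evalP r) U) : q = r := by
  obtain ⟨p, hp⟩ := hne
  obtain ⟨δ, hδ, hball⟩ := Metric.isOpen_iff.mp hU p hp
  rw [← ball_prod_same, Real.ball_eq_Ioo, Real.ball_eq_Ioo] at hball
  refine MvPolynomial.funext_set ![Ioo (p.1 - δ) (p.1 + δ), Ioo (p.2 - δ) (p.2 + δ)] ?_ ?_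
  · rw [Fin.forall_fin_two]
    exact ⟨Ioo_infinite (by linarith), Ioo_infinite (by linarith)⟩
  · intro x hx
    rw [← evalP_coords, ← evalP_coords]
    exact h (hball ⟨hx 0 (mem_univ _), hx 1 (mem_univ _)⟩)

lemma contDiff_evalP (q : BPoly) {k : WithTop ℕ∞} : ContDiff ℝ k (evalP q) := by
  have hcoord : ∀ i : Fin 2, AnalyticOnNhd ℝ (fun p : Pt ↦ ![p.1, p.2] i) univ := by
    rw [Fin.forall_fin_two]
    exact ⟨fun p _ ↦ analyticAt_fst, fun p _ ↦ analyticAt_snd⟩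
  have h := AnalyticOnNhd.aeval_mvPolynomial hcoord q
  simp only [MvPolynomial.aeval_eq_eval] at h
  exact contDiffOn_univ.mp (h.contDiffOn uniqueDiffOn_univ)

lemma continuous_evalP (q : BPoly) : Continuous (evalP q) := (contDiff_evalP q (k := 0)).continuous

/-- The derivative of a polynomial along the vector `w`. -/
def derivAlong (w : Pt) : Derivation ℝ BPoly BPoly := w.1 • pderiv 0 + w.2 • pderiv 1

lemma derivAlong_apply (w : Pt) (q : BPoly) :
    derivAlong w q = w.1 • pderiv 0 q + w.2 • pderiv 1 q := rfl

@[simp] lemma derivAlong_X_zero (w : Pt) : derivAlong w (X 0) = C w.1 := by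
  simp [derivAlong_apply, smul_eq_C_mul]

@[simp] lemma derivAlong_X_one (w : Pt) : derivAlong w (X 1) = C w.2 := by
  simp [derivAlong_apply, smul_eq_C_mul]

lemma derivAlong_C (w : Pt) (a : ℝ) : derivAlong w (C a) = 0 := derivation_C _ _

lemma derivAlong_mul (w : Pt) (q r : BPoly) :
    derivAlong w (q * r) = q * derivAlong w r + r * derivAlong w q := (derivAlong w).leibniz q r

lemma exists_derivAlong_X (w : Pt) (i : Fin 2) : ∃ a : ℝ, derivAlong w (X i) = C a := by
  fin_cases i
  exacts [⟨w.1, derivAlong_X_zero w⟩, ⟨w.2, derivAlong_X_one w⟩]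

lemma derivAlong_commute (w w' : Pt) (q : BPoly) :
    derivAlong w (derivAlong w' q) = derivAlong w' (derivAlong w q) := by
  have hbracket : ⁅derivAlong w, derivAlong w'⁆ = 0 := by
    refine derivation_ext fun i ↦ ?_
    obtain ⟨a, ha⟩ := exists_derivAlong_X w i
    obtain ⟨b, hb⟩ := exists_derivAlong_X w' i
    rw [Derivation.commutator_apply, ha, hb, derivAlong_C, derivAlong_C, sub_zero,
      Derivation.coe_zero, Pi.zero_apply]
  rw [← sub_eq_zero, ← Derivation.commutator_apply, hbracket, Derivation.coe_zero, Pi.zero_apply]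

lemma commute_derivAlong (w w' : Pt) :
    Commute (derivAlong w : Module.End ℝ BPoly) (derivAlong w' : Module.End ℝ BPoly) :=
  LinearMap.ext fun q ↦ derivAlong_commute w w' q

lemma hasDerivAt_evalP_line (q : BPoly) (p w : Pt) (t : ℝ) :
    HasDerivAt (fun t : ℝ ↦ evalP q (p + t • w)) (evalP (derivAlong w q) (p + t • w)) t := by
  induction q using MvPolynomial.induction_on with
  | C a => simpa only [evalP_C, derivAlong_C, evalP_zero] using hasDerivAt_const t a
  | add q r hq hr => simpa only [evalP_add, map_add] using hq.fun_add hr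
  | mul_X q i hq =>
    have hX : HasDerivAt (fun t : ℝ ↦ evalP (X i) (p + t • w))
        (evalP (derivAlong w (X i)) (p + t • w)) t := by
      fin_cases i
      · simpa using ((hasDerivAt_id t).mul_const w.1).const_add p.1
      · simpa using ((hasDerivAt_id t).mul_const w.2).const_add p.2
    simp only [evalP_mul, derivAlong_mul, evalP_add]
    exact (hq.fun_mul hX).congr_deriv (by ring)

lemma fderiv_evalP (q : BPoly) (w p : Pt) :
    fderiv ℝ (evalP q) p w = evalP (derivAlong w q) p := by
  have hdiff : DifferentiableAt ℝ (evalP q) p :=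
    (contDiff_evalP q (k := 1)).differentiable (by simp) p
  have hline := hasDerivAt_evalP_line q p w 0
  rw [zero_smul, add_zero] at hline
  rw [← hdiff.lineDeriv_eq_fderiv, lineDeriv, hline.deriv]

lemma evalP_line_eq_of_derivAlong_eq_zero {w : Pt} {q : BPoly} (h : derivAlong w q = 0) (p : Pt)
    (t : ℝ) : evalP q (p + t • w) = evalP q p := by
  have hconst := is_const_of_deriv_eq_zero
    (fun t ↦ (hasDerivAt_evalP_line q p w t).differentiableAt)
    (fun t ↦ by rw [(hasDerivAt_evalP_line q p w t).deriv, h, evalP_zero]) t 0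
  simpa using hconst

lemma exists_derivAlong_eq_one {w : Pt} (hw : w ≠ 0) : ∃ ℓ, derivAlong w ℓ = 1 := by
  have hpos : w.1 * w.1 + w.2 * w.2 ≠ 0 := fun h ↦
    hw (Prod.ext_iff.mpr (by simpa using mul_self_add_mul_self_eq_zero.mp h))
  refine ⟨(w.1 * w.1 + w.2 * w.2)⁻¹ • (w.1 • X 0 + w.2 • X 1), ?_⟩
  rw [Derivation.map_smul, map_add, Derivation.map_smul, Derivation.map_smul, derivAlong_X_zero,
    derivAlong_X_one,
    smul_eq_C_mul, smul_eq_C_mul, smul_eq_C_mul, ← C_mul, ← C_mul, ← C_add, ← C_mul,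
    inv_mul_cancel₀ hpos, C_1]

-- Iterated antiderivatives are built together: if `a` is such a sequence for `q`,
-- then `a k * X i - k * (∂_w X i) * a (k + 1)` is one for `q * X i`.
lemma exists_iterated_antiderivatives {w : Pt} (hw : w ≠ 0) (q : BPoly) :
    ∃ a : ℕ → BPoly, a 0 = q ∧ ∀ k, derivAlong w (a (k + 1)) = a k := by
  induction q using MvPolynomial.induction_on with
  | C c =>
    obtain ⟨ℓ, hℓ⟩ := exists_derivAlong_eq_one hw
    refine ⟨fun k ↦ (c / k.factorial) • ℓ ^ k, by simp [smul_eq_C_mul], fun k ↦ ?_⟩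
    rw [Derivation.map_smul, Derivation.leibniz_pow, hℓ, smul_eq_mul, mul_one, Nat.add_sub_cancel,
      ← Nat.cast_smul_eq_nsmul ℝ, smul_smul, Nat.factorial_succ, Nat.cast_mul]
    congr 1
    field_simp
  | add q r hq hr =>
    obtain ⟨a, ha₀, ha⟩ := hq
    obtain ⟨b, hb₀, hb⟩ := hr
    exact ⟨a + b, by simp [ha₀, hb₀], fun k ↦ by simp [ha, hb]⟩
  | mul_X q i hq =>
    obtain ⟨a, ha₀, ha⟩ := hq
    obtain ⟨c, hc⟩ := exists_derivAlong_X w i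
    refine ⟨fun k ↦ a k * X i - (k * c) • a (k + 1), by simp [ha₀], fun k ↦ ?_⟩
    rw [map_sub, Derivation.map_smul, derivAlong_mul, ha, ha, hc]
    simp only [smul_eq_C_mul, Nat.cast_add, Nat.cast_one, C_mul, C_add, C_1]
    ring

lemma derivAlong_surjective {w : Pt} (hw : w ≠ 0) : Surjective (derivAlong w) := fun q ↦ by
  obtain ⟨a, ha₀, ha⟩ := exists_iterated_antiderivatives hw q
  exact ⟨a 1, by rw [ha 0, ha₀]⟩

/-! ### Sliding and integrating polynomials along a direction -/

/-- The substitution `x ↦ x - α(x) w + v`, where the polynomial `α` is the time for which the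
point `x` moves with velocity `-w`. -/
def slide (w : Pt) (α : BPoly) (v : Pt) : BPoly →ₐ[ℝ] BPoly :=
  aeval ![X 0 - C w.1 * α + C v.1, X 1 - C w.2 * α + C v.2]

/-- The substitution `x ↦ x + v`. -/
abbrev translate (v : Pt) : BPoly →ₐ[ℝ] BPoly := slide 0 0 v

lemma slide_X_zero (w : Pt) (α : BPoly) (v : Pt) : slide w α v (X 0) = X 0 - C w.1 * α + C v.1 :=
  aeval_X _ _

lemma slide_X_one (w : Pt) (α : BPoly) (v : Pt) : slide w α v (X 1) = X 1 - C w.2 * α + C v.2 :=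
  aeval_X _ _

@[simp] lemma slide_C (w : Pt) (α : BPoly) (v : Pt) (a : ℝ) : slide w α v (C a) = C a :=
  algHom_C _ _

@[simp] lemma evalP_slide (w : Pt) (α : BPoly) (v : Pt) (q : BPoly) (p : Pt) :
    evalP (slide w α v q) p = evalP q (p - evalP α p • w + v) := by
  induction q using MvPolynomial.induction_on with
  | C a => rw [slide_C, evalP_C, evalP_C]
  | add q r hq hr => rw [map_add, evalP_add, evalP_add, hq, hr]
  | mul_X q i hq =>
    rw [map_mul, evalP_mul, evalP_mul, hq]
    fin_cases i
    · simp [slide_X_zero, mul_comm]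
    · simp [slide_X_one, mul_comm]

lemma evalP_translate (v : Pt) (q : BPoly) (p : Pt) :
    evalP (translate v q) p = evalP q (p + v) := by
  simp

lemma derivAlong_slide (u w : Pt) (α : BPoly) (v : Pt) (q : BPoly) :
    derivAlong u (slide w α v q) =
      slide w α v (derivAlong u q) - derivAlong u α * slide w α v (derivAlong w q) := by
  induction q using MvPolynomial.induction_on with
  | C a => simp
  | add q r hq hr => simp only [map_add, hq, hr]; ring
  | mul_X q i hq =>
    rw [map_mul, derivAlong_mul, derivAlong_mul, derivAlong_mul, hq]
    simp only [map_add, map_mul]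
    fin_cases i
    · simp [slide_X_zero]; ring
    · simp [slide_X_one]; ring

lemma derivAlong_translate (w v : Pt) (q : BPoly) :
    derivAlong w (translate v q) = translate v (derivAlong w q) := by
  simp [derivAlong_slide]

lemma dvd_sub_slide (w : Pt) (α q : BPoly) : α ∣ q - slide w α 0 q := by
  induction q using MvPolynomial.induction_on with
  | C a => simp
  | add q r hq hr => simpa only [map_add, add_sub_add_comm] using hq.add hr
  | mul_X q i hq =>
    have hX : α ∣ X i - slide w α 0 (X i) := by fin_cases i <;> simp [slide_X_zero, slide_X_one]
    rw [map_mul, show q * X i - slide w α 0 q * slide w α 0 (X i) =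
      X i * (q - slide w α 0 q) + slide w α 0 q * (X i - slide w α 0 (X i)) by ring]
    exact (hq.mul_left _).add (hX.mul_left _)

/-- A lattice point as a point of the plane. -/
def latticePt (v : ℤ × ℤ) : Pt := ((v.1 : ℝ), (v.2 : ℝ))

lemma latticePt_sub (u v : ℤ × ℤ) : latticePt (u - v) = latticePt u - latticePt v := by
  simp [latticePt]

/-- The direction `eₛ` as a vector of the plane. -/
def dirR (s : Fin 3) : Pt := latticePt (dirZ s)

lemma dirR_ne_zero (s : Fin 3) : dirR s ≠ 0 := by
  fin_cases s <;> simp [dirR, dirZ, latticePt]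

/-- The derivative along the direction `eₛ`. -/
abbrev dirDeriv (s : Fin 3) : Derivation ℝ BPoly BPoly := derivAlong (dirR s)

-- Cramer's rule: the determinant of two distinct directions is its own inverse.
lemma exists_smul_dirR_add_smul_dirR {s t : Fin 3} (hst : s ≠ t) (p : Pt) :
    ∃ a b : ℝ, p = a • dirR s + b • dirR t := by
  let det : Pt → Pt → ℝ := fun v w ↦ v.1 * w.2 - v.2 * w.1
  refine ⟨det (dirR s) (dirR t) * det p (dirR t), det (dirR s) (dirR t) * det (dirR s) p, ?_⟩
  fin_cases s <;> fin_cases t <;>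
    first | exact absurd rfl hst | (ext <;> simp [det, dirR, dirZ, latticePt])

lemma exists_eq_C_of_dirDeriv_eq_zero {s t : Fin 3} (hst : s ≠ t) {q : BPoly}
    (hs : dirDeriv s q = 0) (ht : dirDeriv t q = 0) : ∃ a : ℝ, q = C a := by
  refine ⟨evalP q 0, evalP_injective (_root_.funext fun p ↦ ?_)⟩
  obtain ⟨a, b, hab⟩ := exists_smul_dirR_add_smul_dirR hst p
  rw [evalP_C, hab, ← zero_add (a • dirR s), evalP_line_eq_of_derivAlong_eq_zero ht,
    evalP_line_eq_of_derivAlong_eq_zero hs]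

lemma exists_antideriv (s : Fin 3) :
    ∃ g : BPoly →ₗ[ℝ] BPoly, (dirDeriv s : BPoly →ₗ[ℝ] BPoly) ∘ₗ g = LinearMap.id :=
  LinearMap.exists_rightInverse_of_surjective _
    (LinearMap.range_eq_top.mpr (derivAlong_surjective (dirR_ne_zero s)))

/-- A linear choice of antiderivatives along `eₛ`. -/
def antideriv (s : Fin 3) : BPoly →ₗ[ℝ] BPoly := (exists_antideriv s).choose

@[simp] lemma dirDeriv_antideriv (s : Fin 3) (q : BPoly) : dirDeriv s (antideriv s q) = q :=
  LinearMap.congr_fun (exists_antideriv s).choose_spec q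

/-- The polynomial `x ↦ ∫ t in α(x)..β(x), q (x - t eₛ + v)`. -/
def segmentIntegral (s : Fin 3) (α β : BPoly) (v : Pt) : BPoly →ₗ[ℝ] BPoly :=
  ((slide (dirR s) α v).toLinearMap - (slide (dirR s) β v).toLinearMap) ∘ₗ antideriv s

lemma segmentIntegral_apply (s : Fin 3) (α β : BPoly) (v : Pt) (q : BPoly) :
    segmentIntegral s α β v q =
      slide (dirR s) α v (antideriv s q) - slide (dirR s) β v (antideriv s q) := rfl

lemma slide_eq_of_derivAlong_eq_zero {w : Pt} {q : BPoly} (h : derivAlong w q = 0)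
    (α β : BPoly) (v : Pt) : slide w α v q = slide w β v q := by
  refine evalP_injective (_root_.funext fun p ↦ ?_)
  have hline (z : ℝ) : evalP q (p - z • w + v) = evalP q (p + v) := by
    rw [← evalP_line_eq_of_derivAlong_eq_zero h (p + v) (-z), neg_smul]
    congr 1
    abel
  rw [evalP_slide, evalP_slide, hline, hline]

lemma segmentIntegral_dirDeriv (s : Fin 3) (α β : BPoly) (v : Pt) (q : BPoly) :
    segmentIntegral s α β v (dirDeriv s q) = slide (dirR s) α v q - slide (dirR s) β v q := by
  have hker : dirDeriv s (antideriv s (dirDeriv s q) - q) = 0 := by simp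
  have heq := slide_eq_of_derivAlong_eq_zero hker α β v
  simp only [map_sub] at heq
  rw [segmentIntegral_apply]
  linear_combination heq

lemma dirDeriv_segmentIntegral (t s : Fin 3) (α β : BPoly) (v : Pt) (q : BPoly) :
    dirDeriv t (segmentIntegral s α β v q) = segmentIntegral s α β v (dirDeriv t q)
      - dirDeriv t α * slide (dirR s) α v q + dirDeriv t β * slide (dirR s) β v q := by
  have hcomm : dirDeriv t q = dirDeriv s (dirDeriv t (antideriv s q)) := by
    rw [derivAlong_commute, dirDeriv_antideriv]
  rw [hcomm, segmentIntegral_dirDeriv, segmentIntegral_apply, map_sub, derivAlong_slide,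
    derivAlong_slide, dirDeriv_antideriv]
  ring

lemma evalP_segmentIntegral (s : Fin 3) (α β : BPoly) (v : Pt) (q : BPoly) (p : Pt) :
    evalP (segmentIntegral s α β v q) p =
      ∫ t in evalP α p..evalP β p, evalP q (p - t • dirR s + v) := by
  have hderiv (t : ℝ) : HasDerivAt (fun t : ℝ ↦ -evalP (antideriv s q) (p - t • dirR s + v))
      (evalP q (p - t • dirR s + v)) t := by
    have h := ((hasDerivAt_evalP_line (antideriv s q) (p + v) (dirR s) (-t)).scomp t
      (hasDerivAt_neg t)).fun_neg
    simpa [Function.comp_def, sub_eq_add_neg, add_right_comm] using h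
  have hcont : Continuous fun t : ℝ ↦ evalP q (p - t • dirR s + v) :=
    (continuous_evalP q).comp (by fun_prop)
  rw [intervalIntegral.integral_eq_sub_of_hasDerivAt (fun t _ ↦ hderiv t)
    (hcont.intervalIntegrable _ _), segmentIntegral_apply, evalP_sub, evalP_slide, evalP_slide]
  ring

lemma segmentIntegral_one (s : Fin 3) (α β : BPoly) (v : Pt) :
    segmentIntegral s α β v 1 = β - α :=
  evalP_injective (_root_.funext fun p ↦ by simp [evalP_segmentIntegral])

/-! ### Averaging piecewise polynomials along a direction -/

/-- The piecewise polynomials `B` on the grid, stored by local pieces: `p u τ` is the polynomial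
which agrees with `B (· + u)` on the reference triangle `⟨0, τ⟩`. -/
abbrev PieceFamily := ℤ × ℤ → Bool → BPoly

/-- The time at which a point of the reference triangle `⟨0, τ⟩` moving with velocity `-eₛ` leaves
this triangle. -/
def firstCrossing (s : Fin 3) (τ : Bool) : BPoly :=
  ![cond τ (X 0) (X 0 - X 1), cond τ (X 1 - X 0) (X 1), cond τ (X 0) (X 1)] s

/-- The time at which a point of the reference triangle `⟨0, τ⟩` moving with velocity `-eₛ` enters
the triangle `⟨-eₛ, τ⟩`. -/
def secondCrossing (s : Fin 3) (τ : Bool) : BPoly :=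
  ![cond τ (1 + X 0 - X 1) (X 0), cond τ (X 1) (1 + X 1 - X 0), cond τ (X 1) (X 0)] s

/-- Minus the base point of the triangle visited between the two crossing times. -/
def middleShift (s : Fin 3) (τ : Bool) : ℤ × ℤ :=
  ![cond τ (1, 0) 0, cond τ 0 (0, 1), cond τ (1, 0) (0, 1)] s

/-- The pieces of `x ↦ ∫ t in 0..1, B (x - t eₛ)` in terms of the pieces `p` of `B`. -/
def average (s : Fin 3) (p : PieceFamily) : PieceFamily := fun u τ ↦
  segmentIntegral s 0 (firstCrossing s τ) 0 (p u τ)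
    + segmentIntegral s (firstCrossing s τ) (secondCrossing s τ) (latticePt (middleShift s τ))
        (p (u - middleShift s τ) !τ)
    + segmentIntegral s (secondCrossing s τ) 1 (dirR s) (p (u - dirZ s) τ)

@[simp] lemma dirDeriv_firstCrossing (s : Fin 3) (τ : Bool) :
    dirDeriv s (firstCrossing s τ) = 1 := by
  fin_cases s <;> cases τ <;> simp [firstCrossing, dirR, dirZ, latticePt]

@[simp] lemma dirDeriv_secondCrossing (s : Fin 3) (τ : Bool) :
    dirDeriv s (secondCrossing s τ) = 1 := by
  fin_cases s <;> cases τ <;> simp [secondCrossing, dirR, dirZ, latticePt]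

lemma slide_zero_zero (w : Pt) (q : BPoly) : slide w 0 0 q = q :=
  evalP_injective (_root_.funext fun p ↦ by simp)

lemma slide_one_self (w : Pt) (q : BPoly) : slide w 1 w q = q :=
  evalP_injective (_root_.funext fun p ↦ by simp)

lemma average_zero (s : Fin 3) : average s 0 = 0 := by
  funext u τ
  simp [average]

lemma average_sub (s : Fin 3) (p q : PieceFamily) :
    average s (p - q) = average s p - average s q := by
  funext u τ
  simp only [average, Pi.sub_apply, map_sub]
  ring

lemma average_shift (s : Fin 3) (p : PieceFamily) (v : ℤ × ℤ) :
    average s (fun u τ ↦ p (u - v) τ) = fun u τ ↦ average s p (u - v) τ := by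
  funext u τ
  simp only [average, sub_right_comm]

lemma dirDeriv_average_self (s : Fin 3) (p : PieceFamily) (u : ℤ × ℤ) (τ : Bool) :
    dirDeriv s (average s p u τ) = p u τ - p (u - dirZ s) τ := by
  simp only [average, segmentIntegral_apply, map_add, map_sub, derivAlong_slide,
    dirDeriv_antideriv, dirDeriv_firstCrossing, dirDeriv_secondCrossing, slide_zero_zero,
    slide_one_self]
  ring

lemma evalP_average (s : Fin 3) (p : PieceFamily) (u : ℤ × ℤ) (τ : Bool) (x : Pt) :
    evalP (average s p u τ) x =
      (∫ t in (0 : ℝ)..evalP (firstCrossing s τ) x, evalP (p u τ) (x - t • dirR s))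
      + (∫ t in evalP (firstCrossing s τ) x..evalP (secondCrossing s τ) x,
          evalP (p (u - middleShift s τ) !τ) (x - t • dirR s + latticePt (middleShift s τ)))
      + ∫ t in evalP (secondCrossing s τ) x..1,
          evalP (p (u - dirZ s) τ) (x - t • dirR s + dirR s) := by
  simp only [average, evalP_add, evalP_segmentIntegral, evalP_zero, evalP_one, add_zero]

/-- The edge of type `i` at the origin belongs to the triangle `⟨-edgeShift i τ, τ⟩`. -/
def edgeShift (i : Fin 3) (τ : Bool) : ℤ × ℤ :=
  ![cond τ (0, 1) 0, cond τ 0 (1, 0), 0] i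

/-- The two pieces meeting along any edge of type `i` agree on the line through this edge. -/
def ContinuousAcross (i : Fin 3) (p : PieceFamily) : Prop :=
  ∀ u : ℤ × ℤ, ∀ z : ℝ,
    evalP (p (u - edgeShift i false) false) (z • dirR i + latticePt (edgeShift i false)) =
      evalP (p (u - edgeShift i true) true) (z • dirR i + latticePt (edgeShift i true))

section Crossings

variable {s t r : Fin 3} {p : PieceFamily}

lemma continuousAcross_zero_iff : ContinuousAcross 0 p ↔
    ∀ a b z, evalP (p (a, b) false) (z, 0) = evalP (p (a, b - 1) true) (z, 1) := by
  simp [ContinuousAcross, edgeShift, dirR, dirZ, latticePt]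

lemma continuousAcross_one_iff : ContinuousAcross 1 p ↔
    ∀ a b z, evalP (p (a - 1, b) false) (1, z) = evalP (p (a, b) true) (0, z) := by
  simp [ContinuousAcross, edgeShift, dirR, dirZ, latticePt]

lemma continuousAcross_two_iff : ContinuousAcross 2 p ↔
    ∀ a b z, evalP (p (a, b) false) (z, z) = evalP (p (a, b) true) (z, z) := by
  simp [ContinuousAcross, edgeShift, dirR, dirZ, latticePt]

lemma dirDeriv_firstCrossing_mul_jump (hst : s ≠ t) (hsr : s ≠ r) (htr : t ≠ r)
    (h : ContinuousAcross r p) (u : ℤ × ℤ) (τ : Bool) :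
    dirDeriv t (firstCrossing s τ) * (slide (dirR s) (firstCrossing s τ) 0 (p u τ)
      - slide (dirR s) (firstCrossing s τ) (latticePt (middleShift s τ))
          (p (u - middleShift s τ) !τ)) = 0 := by
  obtain ⟨a, b⟩ := u
  refine evalP_injective (_root_.funext fun ⟨x, y⟩ ↦ ?_)
  fin_cases r <;> simp only [Fin.zero_eta, Fin.mk_one, Fin.reduceFinMk, continuousAcross_zero_iff,
      continuousAcross_one_iff, continuousAcross_two_iff] at h <;>
    fin_cases s <;> (try exact absurd rfl hsr) <;>
    fin_cases t <;> (try exact absurd rfl hst) <;> (try exact absurd rfl htr) <;>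
    cases τ <;> simp [firstCrossing, middleShift, dirR, dirZ, latticePt, h]

lemma dirDeriv_secondCrossing_mul_jump (hst : s ≠ t) (hsr : s ≠ r) (htr : t ≠ r)
    (h : ContinuousAcross r p) (u : ℤ × ℤ) (τ : Bool) :
    dirDeriv t (secondCrossing s τ) * (slide (dirR s) (secondCrossing s τ)
        (latticePt (middleShift s τ)) (p (u - middleShift s τ) !τ)
      - slide (dirR s) (secondCrossing s τ) (dirR s) (p (u - dirZ s) τ)) = 0 := by
  have hcancel (x y : ℝ) : x - (1 + x - y) + 1 = y := by ring
  obtain ⟨a, b⟩ := u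
  refine evalP_injective (_root_.funext fun ⟨x, y⟩ ↦ ?_)
  fin_cases r <;> simp only [Fin.zero_eta, Fin.mk_one, Fin.reduceFinMk, continuousAcross_zero_iff,
      continuousAcross_one_iff, continuousAcross_two_iff] at h <;>
    fin_cases s <;> (try exact absurd rfl hsr) <;>
    fin_cases t <;> (try exact absurd rfl hst) <;> (try exact absurd rfl htr) <;>
    cases τ <;> simp [secondCrossing, middleShift, dirR, dirZ, latticePt, h, hcancel]

-- The boundary terms of the Leibniz rule cancel: an edge crossed at a non-constant time (with
-- respect to `eₜ`) has the third type `r`, across which `p` is continuous.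
lemma dirDeriv_average_of_ne (hst : s ≠ t) (hsr : s ≠ r) (htr : t ≠ r)
    (h : ContinuousAcross r p) (u : ℤ × ℤ) (τ : Bool) :
    dirDeriv t (average s p u τ) = average s (fun u τ ↦ dirDeriv t (p u τ)) u τ := by
  have hfirst := dirDeriv_firstCrossing_mul_jump hst hsr htr h u τ
  have hsecond := dirDeriv_secondCrossing_mul_jump hst hsr htr h u τ
  simp only [average, map_add, dirDeriv_segmentIntegral, map_zero, Derivation.map_one_eq_zero]
  linear_combination hfirst + hsecond

lemma continuousAcross_average_of_ne (hst : s ≠ t) (p : PieceFamily) :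
    ContinuousAcross t (average s p) := by
  fin_cases t <;> simp only [Fin.zero_eta, Fin.mk_one, Fin.reduceFinMk, continuousAcross_zero_iff,
      continuousAcross_one_iff, continuousAcross_two_iff] <;> intro a b z <;>
    fin_cases s <;> (try exact absurd rfl hst) <;>
    simp [average, segmentIntegral_apply, firstCrossing, secondCrossing, middleShift, dirR, dirZ,
      latticePt] <;> ring_nf

lemma continuousAcross_average_self (h : ContinuousAcross s p) :
    ContinuousAcross s (average s p) := by
  fin_cases s <;> simp only [Fin.zero_eta, Fin.mk_one, Fin.reduceFinMk, continuousAcross_zero_iff,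
      continuousAcross_one_iff, continuousAcross_two_iff] at h ⊢ <;> intro a b z <;>
    simp [evalP_average, firstCrossing, secondCrossing, middleShift, dirR, dirZ, latticePt, h]

end Crossings

/-! ### Multiplicity vectors -/

/-- The multiplicity vector `n - eₛ`. -/
def decr (s : Fin 3) (n : Fin 3 → ℕ) : Fin 3 → ℕ := Function.update n s (n s - 1)

/-- The number of directions, counted with multiplicity, that are transverse to `eᵢ`. -/
def transverse (n : Fin 3 → ℕ) (i : Fin 3) : ℕ := n (i + 1) + n (i + 2)

/-- The directions of positive multiplicity span the plane. -/
def SpansPlane (n : Fin 3 → ℕ) : Prop := ∀ i, 0 < transverse n i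

lemma exists_ne_and_ne : ∀ s t : Fin 3, ∃ r, s ≠ r ∧ t ≠ r := by decide

section Multiplicities

variable {n : Fin 3 → ℕ} {s t i : Fin 3}

lemma decr_self : decr s n s = n s - 1 := Function.update_self _ _ _

lemma decr_of_ne (h : t ≠ s) : decr s n t = n t := Function.update_of_ne h _ _

lemma decr_le (s : Fin 3) (n : Fin 3 → ℕ) : decr s n ≤ n :=
  update_le_self_iff.mpr (Nat.sub_le _ _)

lemma decr_comm (s t : Fin 3) (n : Fin 3 → ℕ) : decr s (decr t n) = decr t (decr s n) := by
  obtain rfl | hst := eq_or_ne s t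
  · rfl
  · rw [decr, decr_of_ne hst, decr, decr, decr_of_ne hst.symm, decr, Function.update_comm hst]

lemma transverse_decr_self : transverse (decr i n) i = transverse n i := by
  rw [transverse, decr_of_ne (by simp), decr_of_ne (by simp), transverse]

lemma transverse_decr_of_ne (hsi : s ≠ i) (hs : 1 ≤ n s) :
    transverse (decr s n) i + 1 = transverse n i := by
  fin_cases s <;> fin_cases i <;> simp [transverse, decr] at hsi hs ⊢ <;> omega

lemma transverse_mono {m : Fin 3 → ℕ} (h : m ≤ n) (i : Fin 3) : transverse m i ≤ transverse n i :=
  Nat.add_le_add (h _) (h _)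

lemma SpansPlane.mono {m : Fin 3 → ℕ} (hm : SpansPlane m) (h : m ≤ n) : SpansPlane n :=
  fun i ↦ (hm i).trans_le (transverse_mono h i)

lemma SpansPlane.of_decr (h : SpansPlane (decr s n)) : SpansPlane n := h.mono (decr_le s n)

lemma spansPlane_iff : SpansPlane n ↔
    1 ≤ n 0 ∧ 1 ≤ n 1 ∨ 1 ≤ n 0 ∧ 1 ≤ n 2 ∨ 1 ≤ n 1 ∧ 1 ≤ n 2 := by
  simp [SpansPlane, Fin.forall_fin_succ, transverse]
  omega

lemma SpansPlane.decr_of_two_le (h : SpansPlane n) (hs : 2 ≤ n s) : SpansPlane (decr s n) := by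
  rw [spansPlane_iff] at h ⊢
  fin_cases s <;> simp [decr] at hs ⊢ <;> omega

lemma sum_decr (hs : 1 ≤ n s) : ∑ t, decr s n t + 1 = ∑ t, n t := by
  fin_cases s <;> simp [decr, Fin.sum_univ_three] at hs ⊢ <;> omega

lemma decr_induction {P : (Fin 3 → ℕ) → Prop}
    (step : ∀ n, (∀ s, 1 ≤ n s → P (decr s n)) → P n) (n : Fin 3 → ℕ) : P n := by
  induction hk : ∑ t, n t using Nat.strong_induction_on generalizing n with
  | _ k ih => exact step n fun s hs ↦ ih _ (by rw [← hk, ← sum_decr hs]; omega) _ rfl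

end Multiplicities

/-! ### The pieces of the box splines -/

/-- The pieces of the box splines whose multiplicities are at most one: the indicator functions of
the three unit parallelograms and the Courant hat function. -/
def basePieces (n : Fin 3 → ℕ) : PieceFamily := fun u τ ↦
  if n 2 = 0 then if u = (0, 0) then 1 else 0
  else if n 1 = 0 then if u = cond τ (1, 0) (0, 0) then 1 else 0
  else if n 0 = 0 then if u = cond τ (0, 0) (0, 1) then 1 else 0
  else if u = (0, 0) then cond τ (X 0) (X 1)
  else if u = (1, 1) then cond τ (1 - X 1) (1 - X 0)
  else if u = cond τ (1, 0) (0, 1) then cond τ (X 1 - X 0) (X 0 - X 1)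
  else 0

open Classical in
/-- The pieces of the box spline `B_n`; multiplicities `0` are allowed as long as the remaining
directions span the plane, and the junk value is `0` otherwise. -/
def boxPieces (n : Fin 3 → ℕ) : PieceFamily :=
  if SpansPlane n then
    (average 0)^[n 0 - 1] ((average 1)^[n 1 - 1] ((average 2)^[n 2 - 1] (basePieces n)))
  else 0

section BoxPieces

variable {n : Fin 3 → ℕ} {s t i : Fin 3}

lemma boxPieces_of_not_spansPlane (h : ¬SpansPlane n) : boxPieces n = 0 := if_neg h

lemma boxPieces_of_le_one (h : SpansPlane n) (hn : ∀ t, n t ≤ 1) : boxPieces n = basePieces n := by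
  rw [boxPieces, if_pos h, Nat.sub_eq_zero_of_le (hn 0), Nat.sub_eq_zero_of_le (hn 1),
    Nat.sub_eq_zero_of_le (hn 2), iterate_zero, iterate_zero, iterate_zero]
  rfl

lemma basePieces_decr (hs : 2 ≤ n s) : basePieces (decr s n) = basePieces n := by
  have hzero (t : Fin 3) : decr s n t = 0 ↔ n t = 0 := by
    obtain rfl | hts := eq_or_ne t s
    · rw [decr_self]; omega
    · rw [decr_of_ne hts]
  funext u τ
  simp only [basePieces, hzero]

lemma boxPieces_eq_average (h : SpansPlane n) (hs : 2 ≤ n s) (hlt : ∀ t < s, n t ≤ 1) :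
    boxPieces n = average s (boxPieces (decr s n)) := by
  obtain ⟨k, hk⟩ := Nat.exists_eq_add_of_le hs
  have hpred : n s - 1 = k + 1 := by omega
  rw [boxPieces, boxPieces, if_pos h, if_pos (h.decr_of_two_le hs), basePieces_decr hs]
  match s with
  | 0 => rw [decr_self, hpred, Nat.add_sub_cancel, iterate_succ_apply', decr_of_ne (by decide),
      decr_of_ne (by decide)]
  | 1 =>
    rw [decr_self, hpred, Nat.add_sub_cancel, iterate_succ_apply', decr_of_ne (by decide),
      decr_of_ne (by decide), Nat.sub_eq_zero_of_le (hlt 0 (by decide)),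
      iterate_zero, id, id]
  | 2 =>
    rw [decr_self, hpred, Nat.add_sub_cancel, iterate_succ_apply', decr_of_ne (by decide),
      decr_of_ne (by decide), Nat.sub_eq_zero_of_le (hlt 0 (by decide)),
      Nat.sub_eq_zero_of_le (hlt 1 (by decide)), iterate_zero, iterate_zero, id, id, id, id]

lemma boxPieces_induction {P : (Fin 3 → ℕ) → PieceFamily → Prop}
    (degenerate : ∀ n, ¬SpansPlane n → P n 0)
    (base : ∀ n, SpansPlane n → (∀ t, n t ≤ 1) → P n (basePieces n))
    (average : ∀ n s, SpansPlane n → 2 ≤ n s → (∀ t < s, n t ≤ 1) →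
      P (decr s n) (boxPieces (decr s n)) → P n (average s (boxPieces (decr s n))))
    (n : Fin 3 → ℕ) : P n (boxPieces n) := by
  induction n using decr_induction with | step n ih
  by_cases h : SpansPlane n
  swap
  · rw [boxPieces_of_not_spansPlane h]
    exact degenerate n h
  by_cases hn : ∀ t, n t ≤ 1
  · rw [boxPieces_of_le_one h hn]
    exact base n h hn
  · push Not at hn
    obtain ⟨s, hs, hmin⟩ := wellFounded_lt.has_min {s | 1 < n s} hn
    have hlt : ∀ t < s, n t ≤ 1 := fun t hts ↦ not_lt.mp fun ht ↦ hmin t ht hts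
    rw [boxPieces_eq_average h hs hlt]
    exact average n s h hs hlt (ih s (Nat.one_le_of_lt hs))

lemma continuousAcross_basePieces (hn : ∀ t, n t ≤ 1) (hi : 2 ≤ transverse n i) :
    ContinuousAcross i (basePieces n) := by
  obtain ⟨h₁, h₂⟩ : n (i + 1) = 1 ∧ n (i + 2) = 1 := by
    have := hn (i + 1)
    have := hn (i + 2)
    unfold transverse at hi
    omega
  fin_cases i <;> simp only [Fin.zero_eta, Fin.mk_one, Fin.reduceFinMk, continuousAcross_zero_iff,
      continuousAcross_one_iff, continuousAcross_two_iff] <;> intro a b z <;>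
    simp [basePieces, Prod.ext_iff] at h₁ h₂ ⊢ <;>
    grind [evalP_zero, evalP_one, evalP_sub, evalP_X_zero, evalP_X_one]

lemma continuousAcross_boxPieces (n : Fin 3 → ℕ) :
    ∀ i, 2 ≤ transverse n i → ContinuousAcross i (boxPieces n) := by
  refine boxPieces_induction (P := fun n p ↦ ∀ i, 2 ≤ transverse n i → ContinuousAcross i p)
    (fun n _ i _ u z ↦ by simp) (fun n _ hn i hi ↦ continuousAcross_basePieces hn hi)
    (fun n s _ _ _ ih i hi ↦ ?_) n
  obtain rfl | hsi := eq_or_ne s i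
  · exact continuousAcross_average_self (ih s (by rwa [transverse_decr_self]))
  · exact continuousAcross_average_of_ne hsi _

lemma dirDeriv_basePieces_of_not_spansPlane_decr (hs : ¬SpansPlane (decr s n)) (u : ℤ × ℤ)
    (τ : Bool) : dirDeriv s (basePieces n u τ) = 0 := by
  have hzero : n 0 = 0 ∨ n 1 = 0 ∨ n 2 = 0 := by
    rw [spansPlane_iff] at hs
    by_contra hne
    fin_cases s <;> simp [decr] at hs <;> omega
  unfold basePieces
  split_ifs <;> first | simp | omega

lemma dirDeriv_basePieces (hn : ∀ t, n t ≤ 1) (hs : 1 ≤ n s)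
    (u : ℤ × ℤ) (τ : Bool) :
    dirDeriv s (basePieces n u τ) =
      boxPieces (decr s n) u τ - boxPieces (decr s n) (u - dirZ s) τ := by
  by_cases hspan : SpansPlane (decr s n)
  swap
  · rw [dirDeriv_basePieces_of_not_spansPlane_decr hspan, boxPieces_of_not_spansPlane hspan]
    simp
  · have hone : n 0 = 1 ∧ n 1 = 1 ∧ n 2 = 1 := by
      rw [spansPlane_iff] at hspan
      have := hn 0; have := hn 1; have := hn 2
      fin_cases s <;> simp [decr] at hspan hs <;> omega
    obtain ⟨h₀, h₁, h₂⟩ := hone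
    rw [boxPieces_of_le_one hspan fun t ↦ (decr_le s n t).trans (hn t)]
    obtain ⟨a, b⟩ := u
    fin_cases s <;> cases τ <;> simp [basePieces, decr, h₀, h₁, h₂, dirZ, Prod.ext_iff,
      dirR, latticePt, apply_ite (derivAlong _)] <;> grind

lemma boxPieces_decr_eq_average (hs : 2 ≤ n s) (hlt : ∀ r < s, n r ≤ 1) (hst : s ≠ t) :
    boxPieces (decr t n) = average s (boxPieces (decr t (decr s n))) := by
  by_cases h : SpansPlane (decr t n)
  · rw [decr_comm]
    exact boxPieces_eq_average h (by rwa [decr_of_ne hst]) fun r hr ↦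
      (decr_le t n r).trans (hlt r hr)
  · rw [boxPieces_of_not_spansPlane h, decr_comm,
      boxPieces_of_not_spansPlane (mt SpansPlane.of_decr h), average_zero]

lemma dirDeriv_average_boxPieces (hs : 2 ≤ n s) (hlt : ∀ r < s, n r ≤ 1) (hst : s ≠ t)
    (ht : 1 ≤ n t) (ih : ∀ u τ, dirDeriv t (boxPieces (decr s n) u τ) =
      boxPieces (decr t (decr s n)) u τ - boxPieces (decr t (decr s n)) (u - dirZ t) τ)
    (u : ℤ × ℤ) (τ : Bool) :
    dirDeriv t (average s (boxPieces (decr s n)) u τ) =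
      boxPieces (decr t n) u τ - boxPieces (decr t n) (u - dirZ t) τ := by
  obtain ⟨r, hsr, htr⟩ := exists_ne_and_ne s t
  have hcont : ContinuousAcross r (boxPieces (decr s n)) := by
    refine continuousAcross_boxPieces _ r ?_
    have hs' := transverse_decr_of_ne hsr (Nat.one_le_of_lt hs)
    have ht' := transverse_decr_of_ne (n := decr s n) htr (by rwa [decr_of_ne hst.symm])
    have hs'' := transverse_decr_of_ne (n := decr t (decr s n)) hsr
      (by rw [decr_of_ne hst, decr_self]; omega)
    omega
  have hfamily : (fun u τ ↦ dirDeriv t (boxPieces (decr s n) u τ)) =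
      boxPieces (decr t (decr s n)) - fun u τ ↦ boxPieces (decr t (decr s n)) (u - dirZ t) τ :=
    _root_.funext fun u ↦ _root_.funext fun τ ↦ ih u τ
  rw [dirDeriv_average_of_ne hst hsr htr hcont, hfamily, average_sub, average_shift,
    boxPieces_decr_eq_average hs hlt hst]
  rfl

lemma dirDeriv_boxPieces (n : Fin 3 → ℕ) : ∀ t, 1 ≤ n t → ∀ u τ,
    dirDeriv t (boxPieces n u τ) =
      boxPieces (decr t n) u τ - boxPieces (decr t n) (u - dirZ t) τ := by
  refine boxPieces_induction (P := fun n p ↦ ∀ t, 1 ≤ n t → ∀ u τ, dirDeriv t (p u τ) =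
      boxPieces (decr t n) u τ - boxPieces (decr t n) (u - dirZ t) τ)
    (fun n h t _ u τ ↦ ?_) (fun n _ hn t ht ↦ dirDeriv_basePieces hn ht)
    (fun n s _ hs hlt ih t ht u τ ↦ ?_) n
  · rw [boxPieces_of_not_spansPlane (mt SpansPlane.of_decr h)]
    simp
  · obtain rfl | hst := eq_or_ne s t
    · exact dirDeriv_average_self s _ u τ
    · exact dirDeriv_average_boxPieces hs hlt hst ht (ih t (by rwa [decr_of_ne hst.symm])) u τ

end BoxPieces

/-! ### Supports and the partition of unity -/

/-- The hexagon spanned by the directions with multiplicities `n`, as a set of triangles: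
`u ∈ supportHexagon n τ` means that the triangle `⟨u, τ⟩` lies in the hexagon. -/
def supportHexagon (n : Fin 3 → ℕ) (τ : Bool) : Set (ℤ × ℤ) :=
  {u | 0 ≤ u.1 ∧ u.1 + 1 ≤ n 0 + n 2 ∧ 0 ≤ u.2 ∧ u.2 + 1 ≤ n 1 + n 2 ∧
    cond τ (1 ≤ u.1 - u.2 + n 1 ∧ u.1 - u.2 ≤ n 0) (0 ≤ u.1 - u.2 + n 1 ∧ u.1 - u.2 + 1 ≤ n 0)}

section Support

variable {n : Fin 3 → ℕ} {s : Fin 3} {u : ℤ × ℤ} {τ : Bool}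

lemma mem_supportHexagon_of_basePieces_ne_zero (h : SpansPlane n) (hn : ∀ t, n t ≤ 1)
    (hu : basePieces n u τ ≠ 0) : u ∈ supportHexagon n τ := by
  have := hn 0; have := hn 1; have := hn 2
  obtain ⟨a, b⟩ := u
  rw [spansPlane_iff] at h
  cases τ <;> simp [basePieces, supportHexagon, Prod.ext_iff] at * <;> split_ifs at hu <;>
    grind

lemma mem_supportHexagon_of_mem_decr (hs : 1 ≤ n s) (hu : u ∈ supportHexagon (decr s n) τ) :
    u ∈ supportHexagon n τ := by
  fin_cases s <;> cases τ <;> simp [supportHexagon, decr] at hu hs ⊢ <;> omega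

lemma mem_supportHexagon_of_sub_middleShift_mem_decr (hs : 1 ≤ n s)
    (hu : u - middleShift s τ ∈ supportHexagon (decr s n) !τ) : u ∈ supportHexagon n τ := by
  fin_cases s <;> cases τ <;> simp [supportHexagon, decr, middleShift] at hu hs ⊢ <;> omega

lemma mem_supportHexagon_of_sub_dirZ_mem_decr (hs : 1 ≤ n s)
    (hu : u - dirZ s ∈ supportHexagon (decr s n) τ) : u ∈ supportHexagon n τ := by
  fin_cases s <;> cases τ <;> simp [supportHexagon, decr, dirZ] at hu hs ⊢ <;> omega

lemma support_boxPieces_subset (n : Fin 3 → ℕ) :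
    ∀ τ, (support fun u ↦ boxPieces n u τ) ⊆ supportHexagon n τ := by
  refine boxPieces_induction (P := fun n p ↦ ∀ τ, (support fun u ↦ p u τ) ⊆ supportHexagon n τ)
    (fun n _ τ u hu ↦ absurd rfl hu)
    (fun n h hn τ u hu ↦ mem_supportHexagon_of_basePieces_ne_zero h hn hu)
    (fun n s _ hs _ ih τ u hu ↦ ?_) n
  have hs : 1 ≤ n s := Nat.one_le_of_lt hs
  have hzero {v : ℤ × ℤ} {σ : Bool} (hv : v ∉ supportHexagon (decr s n) σ) :
      boxPieces (decr s n) v σ = 0 := notMem_support.mp fun h ↦ hv (ih σ h)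
  by_contra hu'
  refine hu ?_
  simp only [average]
  rw [hzero (mt (mem_supportHexagon_of_mem_decr hs) hu'),
    hzero (mt (mem_supportHexagon_of_sub_middleShift_mem_decr hs) hu'),
    hzero (mt (mem_supportHexagon_of_sub_dirZ_mem_decr hs) hu')]
  simp only [map_zero, add_zero]

lemma supportHexagon_finite (n : Fin 3 → ℕ) (τ : Bool) : (supportHexagon n τ).Finite := by
  refine (Set.finite_Icc (0, 0) ((n 0 + n 2 : ℤ), (n 1 + n 2 : ℤ))).subset ?_
  rintro u ⟨h₁, h₂, h₃, h₄, -⟩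
  exact ⟨⟨h₁, h₃⟩, by simp only; omega, by simp only; omega⟩

lemma support_boxPieces_finite (n : Fin 3 → ℕ) (τ : Bool) :
    (support fun u ↦ boxPieces n u τ).Finite :=
  (supportHexagon_finite n τ).subset (support_boxPieces_subset n τ)

end Support

section Finsum

variable {M : Type*} [AddCommMonoid M] {f : ℤ × ℤ → M}

lemma finsum_sub_right (f : ℤ × ℤ → M) (v : ℤ × ℤ) : ∑ᶠ u, f (u - v) = ∑ᶠ u, f u :=
  finsum_comp_equiv (f := f) (Equiv.subRight v)

lemma finite_support_sub_right (h : (support f).Finite) (v : ℤ × ℤ) :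
    (support fun u ↦ f (u - v)).Finite :=
  h.preimage (f := fun u ↦ u - v) sub_left_injective.injOn

end Finsum

lemma average_one (s : Fin 3) : average s 1 = 1 := by
  funext u τ
  simp only [average, Pi.one_apply, segmentIntegral_one]
  ring

lemma finsum_average (s : Fin 3) {p : PieceFamily} (hfin : ∀ τ, (support fun u ↦ p u τ).Finite)
    (hsum : ∀ τ, ∑ᶠ u, p u τ = 1) (τ : Bool) : ∑ᶠ u, average s p u τ = 1 := by
  have hterm (L : BPoly →ₗ[ℝ] BPoly) (v : ℤ × ℤ) (σ : Bool) :
      ∑ᶠ u, L (p (u - v) σ) = L 1 ∧ (support fun u ↦ L (p (u - v) σ)).Finite := by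
    have hshift := finite_support_sub_right (hfin σ) v
    refine ⟨?_, hshift.subset (support_comp_subset L.map_zero _)⟩
    rw [← map_finsum L hshift, finsum_sub_right (fun u ↦ p u σ), hsum]
  have hfirst := hterm (segmentIntegral s 0 (firstCrossing s τ) 0) 0 τ
  have hmiddle := hterm (segmentIntegral s (firstCrossing s τ) (secondCrossing s τ)
    (latticePt (middleShift s τ))) (middleShift s τ) !τ
  have hlast := hterm (segmentIntegral s (secondCrossing s τ) 1 (dirR s)) (dirZ s) τ
  simp only [sub_zero] at hfirst
  simp only [average]
  rw [finsum_add_distrib ((hfirst.2.union hmiddle.2).subset (support_add _ _)) hlast.2,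
    finsum_add_distrib hfirst.2 hmiddle.2, hfirst.1, hmiddle.1, hlast.1]
  exact congr_fun₂ (average_one s) 0 τ

lemma finsum_basePieces {n : Fin 3 → ℕ} (h : SpansPlane n) (hn : ∀ t, n t ≤ 1) (τ : Bool) :
    ∑ᶠ u, basePieces n u τ = 1 := by
  have hsub : (support fun u ↦ basePieces n u τ) ⊆
      (({(0, 0), (1, 1), (0, 1), (1, 0)} : Finset (ℤ × ℤ)) : Set (ℤ × ℤ)) := by
    intro u hu
    obtain ⟨h₁, h₂, h₃, h₄, -⟩ := mem_supportHexagon_of_basePieces_ne_zero h hn hu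
    have := hn 0; have := hn 1; have := hn 2
    simp only [Finset.coe_insert, Finset.coe_singleton, mem_insert_iff, mem_singleton_iff,
      Prod.ext_iff]
    omega
  rw [finsum_eq_sum_of_support_subset _ hsub, Finset.sum_insert (by simp),
    Finset.sum_insert (by simp), Finset.sum_insert (by simp), Finset.sum_singleton]
  unfold basePieces
  cases τ <;> simp <;> split_ifs <;> simp

lemma finsum_boxPieces (n : Fin 3 → ℕ) : SpansPlane n → ∀ τ, ∑ᶠ u, boxPieces n u τ = 1 :=
  boxPieces_induction (P := fun n p ↦ SpansPlane n → ∀ τ, ∑ᶠ u, p u τ = 1)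
    (fun _ h h' ↦ absurd h' h) (fun _ h hn _ ↦ finsum_basePieces h hn)
    (fun _ s h hs _ ih _ ↦ finsum_average s (support_boxPieces_finite _)
      (ih (h.decr_of_two_le hs))) n

/-! ### Linear combinations of translates on a reference triangle -/

section Combination

variable {n : Fin 3 → ℕ} {s : Fin 3} {τ : Bool} {a b : ℤ × ℤ → ℝ}

lemma support_smul_boxPieces_finite (n : Fin 3 → ℕ) (τ : Bool) (a : ℤ × ℤ → ℝ) :
    (support fun u ↦ a u • boxPieces n u τ).Finite :=
  (support_boxPieces_finite n τ).subset (support_smul_subset_right a _)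

/-- The piece on the reference triangle `⟨0, τ⟩` of the linear combination `∑ a u • B_n (· + u)` of
translates of the box spline. -/
def boxCombination (n : Fin 3 → ℕ) (τ : Bool) : (ℤ × ℤ → ℝ) →ₗ[ℝ] BPoly where
  toFun a := ∑ᶠ u, a u • boxPieces n u τ
  map_add' a b := by
    simp only [Pi.add_apply, add_smul]
    exact finsum_add_distrib (support_smul_boxPieces_finite n τ a)
      (support_smul_boxPieces_finite n τ b)
  map_smul' r a := by
    simp only [Pi.smul_apply, smul_assoc, RingHom.id_apply, smul_finsum]

lemma boxCombination_apply (n : Fin 3 → ℕ) (τ : Bool) (a : ℤ × ℤ → ℝ) :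
    boxCombination n τ a = ∑ᶠ u, a u • boxPieces n u τ := rfl

lemma boxCombination_const (h : SpansPlane n) (κ : ℝ) :
    boxCombination n τ (fun _ ↦ κ) = C κ := by
  rw [boxCombination_apply, ← smul_finsum, finsum_boxPieces n h, smul_eq_C_mul, mul_one]

lemma boxCombination_of_not_spansPlane (h : ¬SpansPlane n) : boxCombination n τ a = 0 := by
  simp [boxCombination_apply, boxPieces_of_not_spansPlane h]

lemma boxCombination_congr (h : ∀ u, boxPieces n u τ ≠ 0 → a u = b u) :
    boxCombination n τ a = boxCombination n τ b := by
  refine finsum_congr fun u ↦ ?_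
  by_cases hu : boxPieces n u τ = 0
  · rw [hu, smul_zero, smul_zero]
  · rw [h u hu]

lemma dirDeriv_boxCombination (hs : 1 ≤ n s) :
    dirDeriv s (boxCombination n τ a) =
      boxCombination (decr s n) τ (fun u ↦ a u - a (u + dirZ s)) := by
  have hshift : (support fun u ↦ a u • boxPieces (decr s n) (u - dirZ s) τ).Finite :=
    (finite_support_sub_right (support_boxPieces_finite (decr s n) τ) (dirZ s)).subset
      (support_smul_subset_right a _)
  have hsum : ∑ᶠ u, a u • boxPieces (decr s n) (u - dirZ s) τ =
      boxCombination (decr s n) τ fun u ↦ a (u + dirZ s) := by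
    rw [boxCombination_apply]
    simpa only [sub_add_cancel] using
      finsum_sub_right (fun u ↦ a (u + dirZ s) • boxPieces (decr s n) u τ) (dirZ s)
  calc dirDeriv s (boxCombination n τ a)
      = ∑ᶠ u, (a u • boxPieces (decr s n) u τ - a u • boxPieces (decr s n) (u - dirZ s) τ) := by
        rw [boxCombination_apply, map_finsum _ (support_smul_boxPieces_finite n τ a)]
        simp only [Derivation.map_smul, dirDeriv_boxPieces n s hs, smul_sub]
    _ = boxCombination (decr s n) τ a - boxCombination (decr s n) τ fun u ↦ a (u + dirZ s) := by
        rw [finsum_sub_distrib (support_smul_boxPieces_finite _ _ _) hshift, hsum]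
        rfl
    _ = boxCombination (decr s n) τ (fun u ↦ a u - a (u + dirZ s)) := (map_sub _ _ _).symm

end Combination

/-! ### The box splines are piecewise polynomial -/

/-- `p` is the family of local pieces of the function `B`. -/
def HasPieces (B : Pt → ℝ) (p : PieceFamily) : Prop :=
  ∀ u τ, ∀ x ∈ Tri.toSet ⟨0, τ⟩, B (x + latticePt u) = evalP (p u τ) x

section Pieces

variable {s : Fin 3} {τ : Bool} {x : Pt} {t : ℝ}

lemma crossing_bounds (s : Fin 3) (hx : x ∈ Tri.toSet ⟨0, τ⟩) :
    0 ≤ evalP (firstCrossing s τ) x ∧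
      evalP (firstCrossing s τ) x ≤ evalP (secondCrossing s τ) x ∧
      evalP (secondCrossing s τ) x ≤ 1 := by
  fin_cases s <;> cases τ <;> simp [Tri.toSet, firstCrossing, secondCrossing] at hx ⊢ <;> grind

lemma sub_smul_dirR_mem_toSet (hx : x ∈ Tri.toSet ⟨0, τ⟩)
    (ht : t ∈ Ioo 0 (evalP (firstCrossing s τ) x)) : x - t • dirR s ∈ Tri.toSet ⟨0, τ⟩ := by
  obtain ⟨ht₀, ht₁⟩ := ht
  fin_cases s <;> cases τ <;> simp [Tri.toSet, firstCrossing, dirR, dirZ, latticePt] at hx ht₁ ⊢ <;>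
    grind

lemma sub_smul_dirR_add_middleShift_mem_toSet (hx : x ∈ Tri.toSet ⟨0, τ⟩)
    (ht : t ∈ Ioo (evalP (firstCrossing s τ) x) (evalP (secondCrossing s τ) x)) :
    x - t • dirR s + latticePt (middleShift s τ) ∈ Tri.toSet ⟨0, !τ⟩ := by
  obtain ⟨ht₀, ht₁⟩ := ht
  fin_cases s <;> cases τ <;>
    simp [Tri.toSet, firstCrossing, secondCrossing, middleShift, dirR, dirZ, latticePt]
      at hx ht₀ ht₁ ⊢ <;> grind

lemma sub_smul_dirR_add_dirR_mem_toSet (hx : x ∈ Tri.toSet ⟨0, τ⟩)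
    (ht : t ∈ Ioo (evalP (secondCrossing s τ) x) 1) :
    x - t • dirR s + dirR s ∈ Tri.toSet ⟨0, τ⟩ := by
  obtain ⟨ht₀, ht₁⟩ := ht
  fin_cases s <;> cases τ <;>
    simp [Tri.toSet, secondCrossing, dirR, dirZ, latticePt] at hx ht₀ ⊢ <;> grind

lemma intervalIntegral_eq_of_eqOn_Ioo {f : ℝ → ℝ} {a b : ℝ} (hab : a ≤ b) {g : ℝ → ℝ}
    (hg : Continuous g) (h : EqOn f g (Ioo a b)) :
    IntervalIntegrable f MeasureTheory.volume a b ∧ ∫ t in a..b, f t = ∫ t in a..b, g t := by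
  constructor
  · rw [intervalIntegrable_iff_integrableOn_Ioo_of_le hab]
    exact ((intervalIntegrable_iff_integrableOn_Ioo_of_le hab).mp
      (hg.intervalIntegrable a b)).congr_fun h.symm measurableSet_Ioo
  · simp only [intervalIntegral.integral_of_le hab, MeasureTheory.integral_Ioc_eq_integral_Ioo]
    exact MeasureTheory.setIntegral_congr_fun measurableSet_Ioo h

lemma HasPieces.average {B : Pt → ℝ} {p : PieceFamily} (h : HasPieces B p) (s : Fin 3) :
    HasPieces (fun x ↦ ∫ t in (0 : ℝ)..1, B (x - t • dirR s)) (average s p) := by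
  intro u τ x hx
  obtain ⟨hfirst, hsecond, hone⟩ := crossing_bounds s hx
  have hcont (q : BPoly) (v : Pt) : Continuous fun t : ℝ ↦ evalP q (x - t • dirR s + v) :=
    (continuous_evalP q).comp (by fun_prop)
  have hmove (v : ℤ × ℤ) (t : ℝ) : x + latticePt u - t • dirR s =
      x - t • dirR s + latticePt v + latticePt (u - v) := by rw [latticePt_sub]; abel
  obtain ⟨hint₁, heq₁⟩ := intervalIntegral_eq_of_eqOn_Ioo (f := fun t ↦
      B (x + latticePt u - t • dirR s)) hfirst (hcont (p u τ) 0) fun t ht ↦ by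
    simpa [add_sub_right_comm] using h u τ _ (sub_smul_dirR_mem_toSet hx ht)
  obtain ⟨hint₂, heq₂⟩ := intervalIntegral_eq_of_eqOn_Ioo (f := fun t ↦
      B (x + latticePt u - t • dirR s)) hsecond
      (hcont (p (u - middleShift s τ) !τ) (latticePt (middleShift s τ))) fun t ht ↦ by
    simpa only [← hmove] using h (u - middleShift s τ) (!τ) _
      (sub_smul_dirR_add_middleShift_mem_toSet hx ht)
  obtain ⟨hint₃, heq₃⟩ := intervalIntegral_eq_of_eqOn_Ioo (f := fun t ↦
      B (x + latticePt u - t • dirR s)) hone (hcont (p (u - dirZ s) τ) (dirR s)) fun t ht ↦ by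
    exact (congrArg B (hmove (dirZ s) t)).trans
      (h (u - dirZ s) τ _ (sub_smul_dirR_add_dirR_mem_toSet hx ht))
  beta_reduce
  rw [evalP_average, ← intervalIntegral.integral_add_adjacent_intervals (hint₁.trans hint₂) hint₃,
    ← intervalIntegral.integral_add_adjacent_intervals hint₁ hint₂, heq₁, heq₂, heq₃]
  simp only [add_zero]

end Pieces

lemma hat_eq_zero {x y : ℝ}
    (h : x ≤ 0 ∨ y ≤ 0 ∨ 2 ≤ x ∨ 2 ≤ y ∨ 1 ≤ x - y ∨ x - y ≤ -1) : hat (x, y) = 0 := by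
  simp only [hat]
  grind

lemma hasPieces_hat : HasPieces hat (basePieces ![1, 1, 1]) := by
  rintro ⟨a, b⟩ τ ⟨x, y⟩ hx
  cases τ <;> simp [Tri.toSet, basePieces, Prod.ext_iff, latticePt] at hx ⊢ <;>
    split_ifs with h₁ h₂ h₃
  case neg =>
    have : a ≤ -1 ∨ b ≤ -1 ∨ 2 ≤ a ∨ 2 ≤ b ∨ 1 ≤ a - b := by omega
    rify at this
    rw [evalP_zero]
    exact hat_eq_zero (by grind)
  case neg =>
    have : a ≤ -1 ∨ b ≤ -1 ∨ 2 ≤ a ∨ 2 ≤ b ∨ a - b ≤ -1 := by omega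
    rify at this
    rw [evalP_zero]
    exact hat_eq_zero (by grind)
  all_goals
    simp [*, hat]
    grind

lemma hasPieces_boxN (a b c : ℕ) :
    HasPieces (boxN (a + 1) (b + 1) (c + 1)) (boxPieces ![a + 1, b + 1, c + 1]) := by
  have hspan (a b c : ℕ) : SpansPlane ![a + 1, b + 1, c + 1] := by
    intro i; fin_cases i <;> simp [transverse]
  induction a with
  | succ a ih =>
    rw [boxPieces_eq_average (s := 0) (hspan _ _ _) (by simp) (by simp)]
    convert ih.average 0 using 1
    · funext p; rw [boxN]; simp [dirR, dirZ, latticePt, Prod.sub_def]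
    · congr; ext t; fin_cases t <;> simp [decr]
  | zero =>
    induction b with
    | succ b ih =>
      rw [boxPieces_eq_average (s := 1) (hspan _ _ _) (by simp) (by intro t; fin_cases t <;> simp)]
      convert ih.average 1 using 1
      · funext p; rw [boxN]; simp [dirR, dirZ, latticePt, Prod.sub_def]
      · congr; ext t; fin_cases t <;> simp [decr]
    | zero =>
      induction c with
      | succ c ih =>
        rw [boxPieces_eq_average (s := 2) (hspan _ _ _) (by simp)
          (by intro t; fin_cases t <;> simp)]
        convert ih.average 2 using 1
        · funext p; rw [boxN]; simp [dirR, dirZ, latticePt, Prod.sub_def]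
        · congr; ext t; fin_cases t <;> simp [decr]
      | zero =>
        rw [boxPieces_of_le_one (hspan _ _ _) (by intro t; fin_cases t <;> simp)]
        convert hasPieces_hat using 1
        funext p
        rw [boxN]

/-! ### Divisibility by the equation of an edge -/

lemma evalP_line_of_derivAlong_eq_one {ℓ : BPoly} {w : Pt} (hw : derivAlong w ℓ = 1) (p : Pt)
    (t : ℝ) : evalP ℓ (p + t • w) = evalP ℓ p + t := by
  have hderiv (t : ℝ) : HasDerivAt (fun t ↦ evalP ℓ (p + t • w) - t) 0 t := by
    simpa only [hw, evalP_one, sub_self] using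
      (hasDerivAt_evalP_line ℓ p w t).fun_sub (hasDerivAt_id' t)
  have hconst := is_const_of_deriv_eq_zero (fun t ↦ (hderiv t).differentiableAt)
    (fun t ↦ (hderiv t).deriv) t 0
  simp only [zero_smul, add_zero, sub_zero] at hconst
  rw [← hconst, sub_add_cancel]

-- `p ↦ p - ℓ(p) w` retracts the plane onto the line `ℓ = 0`.
lemma dvd_of_forall_evalP_eq_zero {ℓ q : BPoly} {w : Pt} {O : Set Pt} (hw : derivAlong w ℓ = 1)
    (hO : IsOpen O) (hne : ∃ p ∈ O, evalP ℓ p = 0)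
    (h : ∀ p ∈ O, evalP ℓ p = 0 → evalP q p = 0) : ℓ ∣ q := by
  have hretract : Continuous fun p ↦ p - evalP ℓ p • w :=
    continuous_id.sub ((continuous_evalP ℓ).smul continuous_const)
  obtain ⟨p₀, hp₀, hℓ₀⟩ := hne
  have hslide : slide w ℓ 0 q = 0 := by
    refine eq_of_eqOn_isOpen (hO.preimage hretract) ⟨p₀, by simpa [hℓ₀] using hp₀⟩ fun p hp ↦ ?_
    rw [evalP_slide, add_zero, evalP_zero]
    refine h _ hp ?_
    rw [sub_eq_add_neg, ← neg_smul, evalP_line_of_derivAlong_eq_one hw, add_neg_cancel]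
  simpa only [hslide, sub_zero] using dvd_sub_slide w ℓ q

/-- The linear equation of the line `ℝ eᵢ`, positive on the side of the lower triangle. -/
def edgeForm (i : Fin 3) : BPoly := ![X 1, -X 0, X 0 - X 1] i

section EdgeForm

variable {i s : Fin 3} {q : BPoly}

lemma edgeForm_ne_zero (i : Fin 3) : edgeForm i ≠ 0 := by
  intro h
  have heval : evalP (edgeForm i) (2, 1) = 0 := by rw [h, evalP_zero]
  fin_cases i <;> norm_num [edgeForm] at heval

lemma evalP_edgeForm_smul_dirR (i : Fin 3) (z : ℝ) : evalP (edgeForm i) (z • dirR i) = 0 := by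
  fin_cases i <;> simp [edgeForm, dirR, dirZ, latticePt]

lemma dirDeriv_edgeForm_self (i : Fin 3) : dirDeriv i (edgeForm i) = 0 := by
  fin_cases i <;> simp [edgeForm, dirR, dirZ, latticePt]

lemma exists_derivAlong_edgeForm_eq_one (i : Fin 3) : ∃ w, derivAlong w (edgeForm i) = 1 := by
  refine ⟨![(0, 1), (-1, 0), (1, 0)] i, ?_⟩
  fin_cases i <;> simp [edgeForm]

lemma exists_dirDeriv_edgeForm_eq_C (hsi : s ≠ i) :
    ∃ c : ℝ, c ≠ 0 ∧ dirDeriv s (edgeForm i) = C c := by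
  refine ⟨evalP (dirDeriv s (edgeForm i)) 0, ?_⟩
  fin_cases i <;> fin_cases s <;> (try exact absurd rfl hsi) <;>
    simp [edgeForm, dirR, dirZ, latticePt]

lemma edgeForm_dvd_of_forall_evalP_eq_zero (h : ∀ z : ℝ, evalP q (z • dirR i) = 0) :
    edgeForm i ∣ q := by
  obtain ⟨w, hw⟩ := exists_derivAlong_edgeForm_eq_one i
  refine dvd_of_forall_evalP_eq_zero hw isOpen_univ ⟨0, mem_univ _, ?_⟩ fun p _ hp ↦ ?_
  · simpa using evalP_edgeForm_smul_dirR i 0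
  · have hline : (![p.1, p.2, p.2] i : ℝ) • dirR i = p := by
      fin_cases i <;> ext <;> simp [edgeForm, dirR, dirZ, latticePt] at hp ⊢ <;> linarith
    rw [← hline, h]

lemma eq_zero_of_edgeForm_dvd_C {κ : ℝ} (h : edgeForm i ∣ C κ) : κ = 0 := by
  obtain ⟨r, hr⟩ := h
  simpa only [evalP_C, evalP_mul, evalP_edgeForm_smul_dirR, zero_mul]
    using congrArg (evalP · ((0 : ℝ) • dirR i)) hr

end EdgeForm

section PowDvd

variable {D : Derivation ℝ BPoly BPoly} {ℓ q : BPoly} {m : ℕ}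

lemma pow_dvd_derivation_of_eq_zero (hD : D ℓ = 0) (h : ℓ ^ m ∣ q) : ℓ ^ m ∣ D q := by
  obtain ⟨r, rfl⟩ := h
  rw [D.leibniz, D.leibniz_pow, hD]
  simp

lemma pow_sub_one_dvd_derivation (D : Derivation ℝ BPoly BPoly) (h : ℓ ^ m ∣ q) :
    ℓ ^ (m - 1) ∣ D q := by
  obtain ⟨r, rfl⟩ := h
  rw [D.leibniz, D.leibniz_pow]
  simp only [smul_eq_mul, nsmul_eq_mul]
  exact ((pow_dvd_pow _ (Nat.sub_le m 1)).mul_right _).add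
    (((dvd_mul_right _ _).mul_left _).mul_left _)

lemma pow_succ_dvd_of_pow_dvd_derivation {c : ℝ} (hℓ : ℓ ≠ 0) (hc : c ≠ 0) (hD : D ℓ = C c)
    (hdvd : ℓ ∣ q) (h : ℓ ^ m ∣ D q) : ℓ ^ (m + 1) ∣ q := by
  induction m with
  | zero => rwa [zero_add, pow_one]
  | succ k ih =>
    obtain ⟨r, rfl⟩ := ih ((pow_dvd_pow ℓ k.le_succ).trans h)
    have hleibniz : D (ℓ ^ (k + 1) * r) = ℓ ^ k * (ℓ * D r + C ((k + 1) * c) * r) := by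
      rw [D.leibniz, D.leibniz_pow, hD]
      simp only [smul_eq_mul, nsmul_eq_mul, add_tsub_cancel_right, map_mul, map_add, map_natCast,
        map_one, Nat.cast_add, Nat.cast_one]
      ring
    rw [hleibniz, pow_succ, mul_dvd_mul_iff_left (pow_ne_zero k hℓ),
      dvd_add_right (dvd_mul_right _ _)] at h
    have hunit : IsUnit (C ((k + 1) * c) : BPoly) :=
      (IsUnit.mk0 _ (mul_ne_zero k.cast_add_one_ne_zero hc)).map C
    rw [pow_succ ℓ (k + 1)]
    exact mul_dvd_mul_left _ (hunit.dvd_mul_left.mp h)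

end PowDvd

/-! ### Combinations on the two sides of an edge -/

/-- The piece of `∑ a u • B_n (· + u)` on the triangle of orientation `τ` adjacent to the edge from
`0` to `eᵢ`. -/
def edgeCombination (i : Fin 3) (τ : Bool) (n : Fin 3 → ℕ) : (ℤ × ℤ → ℝ) →ₗ[ℝ] BPoly :=
  (translate (latticePt (edgeShift i τ))).toLinearMap ∘ₗ boxCombination n τ ∘ₗ
    LinearMap.funLeft ℝ ℝ (· + edgeShift i τ)

/-- The coefficients `u` for which the supporting hexagon of `B_n (· + u)` contains both triangles
adjacent to the edge from `0` to `eᵢ`. -/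
def commonSupport (i : Fin 3) (n : Fin 3 → ℕ) : Set (ℤ × ℤ) :=
  {u | ∀ τ, u - edgeShift i τ ∈ supportHexagon n τ}

section EdgeCombination

variable {i s : Fin 3} {τ : Bool} {n : Fin 3 → ℕ} {a b : ℤ × ℤ → ℝ} {u : ℤ × ℤ}

lemma edgeCombination_apply (i : Fin 3) (τ : Bool) (n : Fin 3 → ℕ) (a : ℤ × ℤ → ℝ) :
    edgeCombination i τ n a = translate (latticePt (edgeShift i τ))
      (boxCombination n τ fun u ↦ a (u + edgeShift i τ)) := rfl

lemma edgeCombination_const (h : SpansPlane n) (κ : ℝ) :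
    edgeCombination i τ n (fun _ ↦ κ) = C κ := by
  rw [edgeCombination_apply, boxCombination_const h, slide_C]

lemma edgeCombination_congr (h : ∀ u, boxPieces n (u - edgeShift i τ) τ ≠ 0 → a u = b u) :
    edgeCombination i τ n a = edgeCombination i τ n b := by
  rw [edgeCombination_apply, edgeCombination_apply,
    boxCombination_congr fun u hu ↦ h (u + edgeShift i τ) (by rwa [add_sub_cancel_right])]

lemma dirDeriv_edgeCombination (hs : 1 ≤ n s) :
    dirDeriv s (edgeCombination i τ n a) =
      edgeCombination i τ (decr s n) (fun u ↦ a u - a (u + dirZ s)) := by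
  rw [edgeCombination_apply, derivAlong_translate, dirDeriv_boxCombination hs,
    edgeCombination_apply]
  simp only [add_right_comm]

lemma evalP_edgeCombination (p : Pt) : evalP (edgeCombination i τ n a) p =
    ∑ᶠ u, a u * evalP (boxPieces n (u - edgeShift i τ) τ) (p + latticePt (edgeShift i τ)) := by
  have hsum := map_finsum (MvPolynomial.eval ![(p + latticePt (edgeShift i τ)).1,
    (p + latticePt (edgeShift i τ)).2])
    (support_smul_boxPieces_finite n τ fun u ↦ a (u + edgeShift i τ))
  rw [edgeCombination_apply, evalP_translate, boxCombination_apply]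
  refine hsum.trans ?_
  rw [← finsum_sub_right _ (edgeShift i τ)]
  exact finsum_congr fun u ↦ by rw [sub_add_cancel]; exact evalP_smul ..

lemma edgeForm_dvd_edgeCombination_sub (hi : 2 ≤ transverse n i) (a : ℤ × ℤ → ℝ) :
    edgeForm i ∣ edgeCombination i false n a - edgeCombination i true n a := by
  refine edgeForm_dvd_of_forall_evalP_eq_zero fun z ↦ ?_
  rw [evalP_sub, evalP_edgeCombination, evalP_edgeCombination, sub_eq_zero]
  exact finsum_congr fun u ↦ congrArg (a u * ·) (continuousAcross_boxPieces n i hi u z)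

lemma exists_ne_of_transverse_pos (h : 0 < transverse n i) : ∃ s, s ≠ i ∧ 1 ≤ n s := by
  by_contra! hzero
  have h₁ := hzero (i + 1) (by simp)
  have h₂ := hzero (i + 2) (by simp)
  unfold transverse at h
  omega

lemma edgeForm_pow_dvd_edgeCombination_sub (i : Fin 3) (n : Fin 3 → ℕ) : ∀ a,
    edgeForm i ^ (transverse n i - 1) ∣
      edgeCombination i false n a - edgeCombination i true n a := by
  induction n using decr_induction with
  | step n ih =>
    intro a
    obtain hi | hi := Nat.lt_or_ge (transverse n i) 2
    · rw [Nat.sub_eq_zero_of_le (Nat.le_of_lt_succ hi), pow_zero]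
      exact one_dvd _
    · obtain ⟨s, hsi, hs⟩ := exists_ne_of_transverse_pos (n := n) (i := i) (by omega)
      obtain ⟨c, hc, hsc⟩ := exists_dirDeriv_edgeForm_eq_C hsi
      have hexp := transverse_decr_of_ne hsi hs
      rw [show transverse n i - 1 = transverse (decr s n) i - 1 + 1 by omega]
      refine pow_succ_dvd_of_pow_dvd_derivation (edgeForm_ne_zero i) hc hsc
        (edgeForm_dvd_edgeCombination_sub hi a) ?_
      rw [map_sub, dirDeriv_edgeCombination hs, dirDeriv_edgeCombination hs]
      exact ih s hs _

open Classical in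
lemma edgeForm_pow_dvd_of_eq
    (h : ∀ u, (∀ τ, boxPieces n (u - edgeShift i τ) τ ≠ 0) → a u = b u) :
    edgeForm i ^ (transverse n i - 1) ∣
      edgeCombination i false n a - edgeCombination i true n b := by
  set c : ℤ × ℤ → ℝ := fun u ↦ if boxPieces n (u - edgeShift i false) false = 0 then b u else a u
    with hc
  have hlower : edgeCombination i false n a = edgeCombination i false n c :=
    edgeCombination_congr fun u hu ↦ (if_neg hu).symm
  have hupper : edgeCombination i true n b = edgeCombination i true n c := by
    refine edgeCombination_congr fun u hu ↦ ?_
    simp only [hc]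
    split_ifs with hu'
    exacts [rfl, (h u (Bool.forall_bool.mpr ⟨hu', hu⟩)).symm]
  rw [hlower, hupper]
  exact edgeForm_pow_dvd_edgeCombination_sub i n c

lemma mem_commonSupport_of_boxPieces_ne_zero
    (h : ∀ τ, boxPieces n (u - edgeShift i τ) τ ≠ 0) : u ∈ commonSupport i n :=
  fun τ ↦ support_boxPieces_subset n τ (h τ)

lemma mem_commonSupport_iff : u ∈ commonSupport i n ↔
    ![0, 1, 0] i ≤ u.1 ∧ u.1 + 1 ≤ n 0 + n 2 ∧ ![1, 0, 0] i ≤ u.2 ∧ u.2 + 1 ≤ n 1 + n 2 ∧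
      ![0, 1, 1] i ≤ u.1 - u.2 + n 1 ∧ u.1 - u.2 + ![1, 0, 1] i ≤ n 0 := by
  fin_cases i <;> simp [commonSupport, supportHexagon, edgeShift] <;> omega

lemma two_le_transverse_of_mem_commonSupport (hu : u ∈ commonSupport i n) :
    2 ≤ transverse n i := by
  rw [mem_commonSupport_iff] at hu
  fin_cases i <;> simp [transverse] at hu ⊢ <;> omega

lemma spansPlane_of_mem_commonSupport (hu : u ∈ commonSupport i n) : SpansPlane n := by
  rw [mem_commonSupport_iff] at hu
  rw [spansPlane_iff]
  fin_cases i <;> simp at hu ⊢ <;> omega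

/-- The smallest point of `commonSupport i n`, in both coordinates. -/
def corner (i : Fin 3) (n : Fin 3 → ℕ) : ℤ × ℤ :=
  (max (![0, 1, 0] i) (1 - n 1), max (![1, 0, 0] i) (1 - n 0))

lemma eq_corner_or_exists_sub_dirZ_mem (hu : u ∈ commonSupport i n) :
    u = corner i n ∨ ∃ s, 1 ≤ n s ∧ u - dirZ s ∈ commonSupport i (decr s n) := by
  simp only [mem_commonSupport_iff, corner, Prod.ext_iff, Fin.exists_fin_succ] at hu ⊢
  fin_cases i <;> simp [decr, dirZ] at hu ⊢ <;> omega

lemma mem_commonSupport_of_mem_decr (hs : 1 ≤ n s) (hu : u ∈ commonSupport i (decr s n)) :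
    u ∈ commonSupport i n := fun τ ↦ mem_supportHexagon_of_mem_decr hs (hu τ)

lemma eq_apply_corner (h : ∀ s, 1 ≤ n s → ∀ u ∈ commonSupport i (decr s n), a u = a (u + dirZ s))
    (hu : u ∈ commonSupport i n) : a u = a (corner i n) := by
  induction hk : (u.1 + u.2).toNat using Nat.strong_induction_on generalizing u with
  | _ k ih =>
    obtain rfl | ⟨s, hs, hmem⟩ := eq_corner_or_exists_sub_dirZ_mem hu
    · rfl
    · have hmem' := mem_commonSupport_of_mem_decr hs hmem
      have hlt : ((u - dirZ s).1 + (u - dirZ s).2).toNat < k := by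
        rw [mem_commonSupport_iff] at hmem'
        fin_cases s <;> fin_cases i <;> simp [dirZ] at hmem' ⊢ <;> omega
      rw [← ih _ hlt hmem' rfl, h s hs _ hmem, sub_add_cancel]

-- Differentiating makes the differences of `a` vanish, so `a` is a constant `κ` on the common
-- support; by the partition of unity `κ` is then divisible by the edge form.
lemma eq_zero_of_edgeForm_pow_dvd (n : Fin 3 → ℕ) : ∀ a,
    edgeForm i ^ (transverse n i - 1) ∣ edgeCombination i false n a →
      ∀ u ∈ commonSupport i n, a u = 0 := by
  induction n using decr_induction with
  | step n ih =>
    intro a hdvd u hu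
    have hdiff : ∀ s, 1 ≤ n s → ∀ u ∈ commonSupport i (decr s n), a u = a (u + dirZ s) := by
      intro s hs u hu
      refine sub_eq_zero.mp (ih s hs (fun u ↦ a u - a (u + dirZ s)) ?_ u hu)
      rw [← dirDeriv_edgeCombination hs]
      obtain rfl | hsi := eq_or_ne s i
      · rw [transverse_decr_self]
        exact pow_dvd_derivation_of_eq_zero (dirDeriv_edgeForm_self s) hdvd
      · rw [show transverse (decr s n) i - 1 = transverse n i - 1 - 1 by
          rw [← transverse_decr_of_ne hsi hs]; omega]
        exact pow_sub_one_dvd_derivation _ hdvd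
    set κ := a (corner i n)
    have hconst : ∀ u ∈ commonSupport i n, a u = κ := fun u ↦ eq_apply_corner hdiff
    have hsub := edgeForm_pow_dvd_of_eq (i := i) (n := n) (a := a) (b := fun _ ↦ κ)
      fun u hu ↦ hconst u (mem_commonSupport_of_boxPieces_ne_zero hu)
    rw [edgeCombination_const (spansPlane_of_mem_commonSupport hu), dvd_sub_right hdvd] at hsub
    have hi := two_le_transverse_of_mem_commonSupport hu
    rw [hconst u hu]
    exact eq_zero_of_edgeForm_dvd_C ((dvd_pow_self _ (by omega)).trans hsub)

lemma edgeForm_pow_dvd_iff : edgeForm i ^ (transverse n i - 1) ∣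
      edgeCombination i false n a - edgeCombination i true n b ↔
    ∀ u, (∀ τ, boxPieces n (u - edgeShift i τ) τ ≠ 0) → a u = b u := by
  refine ⟨fun h u hu ↦ ?_, edgeForm_pow_dvd_of_eq⟩
  have hsub : edgeForm i ^ (transverse n i - 1) ∣ edgeCombination i false n (a - b) := by
    rw [map_sub]
    simpa only [sub_sub_sub_cancel_right] using
      dvd_sub h (edgeForm_pow_dvd_edgeCombination_sub i n b)
  exact sub_eq_zero.mp (eq_zero_of_edgeForm_pow_dvd n (a - b) hsub u
    (mem_commonSupport_of_boxPieces_ne_zero hu))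

end EdgeCombination

/-! ### The local polynomial space does not depend on the triangle -/

/-- The product of all derivatives transverse to `eᵢ`, counted with multiplicity. -/
def transverseDeriv (n : Fin 3 → ℕ) (i : Fin 3) : Module.End ℝ BPoly :=
  (dirDeriv (i + 1) : Module.End ℝ BPoly) ^ n (i + 1) *
    (dirDeriv (i + 2) : Module.End ℝ BPoly) ^ n (i + 2)

/-- The Dahmen–Micchelli space of the directions `eᵢ` with multiplicities `n`. -/
def dahmenMicchelli (n : Fin 3 → ℕ) : Submodule ℝ BPoly :=
  ⨅ i, LinearMap.ker (transverseDeriv n i)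

section DahmenMicchelli

variable {n : Fin 3 → ℕ} {s t i : Fin 3} {q : BPoly}

lemma mem_dahmenMicchelli : q ∈ dahmenMicchelli n ↔ ∀ i, transverseDeriv n i q = 0 := by
  simp [dahmenMicchelli]

lemma transverseDeriv_decr_of_ne (hsi : s ≠ i) (hs : 1 ≤ n s) :
    transverseDeriv (decr s n) i (dirDeriv s q) = transverseDeriv n i q := by
  have hpow : (dirDeriv s : Module.End ℝ BPoly) ^ n s =
      (dirDeriv s : Module.End ℝ BPoly) ^ (n s - 1) * (dirDeriv s : Module.End ℝ BPoly) := by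
    rw [← pow_succ, Nat.sub_add_cancel hs]
  have hs' : s = i + 1 ∨ s = i + 2 := by clear hpow hs; revert s i; decide
  suffices transverseDeriv (decr s n) i * (dirDeriv s : Module.End ℝ BPoly) = transverseDeriv n i
    from LinearMap.congr_fun this q
  obtain rfl | rfl := hs'
  · rw [transverseDeriv, decr_self, decr_of_ne (by simp), transverseDeriv, hpow, mul_assoc,
      mul_assoc]
    congr 1
    exact ((commute_derivAlong _ _).pow_left _).eq
  · rw [transverseDeriv, decr_self, decr_of_ne (by simp), transverseDeriv, hpow, mul_assoc]

lemma transverseDeriv_decr_self : transverseDeriv (decr i n) i = transverseDeriv n i := by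
  rw [transverseDeriv, decr_of_ne (by simp), decr_of_ne (by simp), transverseDeriv]

lemma transverseDeriv_dirDeriv :
    transverseDeriv n i (dirDeriv s q) = dirDeriv s (transverseDeriv n i q) :=
  LinearMap.congr_fun (((commute_derivAlong _ _).pow_left _).mul_left
    ((commute_derivAlong _ (dirR s)).pow_left _)).eq q

lemma transverseDeriv_translate (v : Pt) :
    transverseDeriv n i (translate v q) = translate v (transverseDeriv n i q) := by
  have hcomm (s : Fin 3) :
      Commute (dirDeriv s : Module.End ℝ BPoly) (translate v).toLinearMap :=
    LinearMap.ext fun q ↦ by simpa using derivAlong_translate (dirR s) v q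
  have hmul : Commute (transverseDeriv n i) (translate v).toLinearMap :=
    ((hcomm (i + 1)).pow_left _).mul_left ((hcomm (i + 2)).pow_left _)
  exact LinearMap.congr_fun hmul.eq q

lemma eq_zero_of_mem_dahmenMicchelli (h : ¬SpansPlane n) (hq : q ∈ dahmenMicchelli n) :
    q = 0 := by
  obtain ⟨i, hi⟩ := not_forall.mp h
  obtain ⟨h₁, h₂⟩ : n (i + 1) = 0 ∧ n (i + 2) = 0 := by unfold transverse at hi; omega
  simpa only [transverseDeriv, h₁, h₂, pow_zero, mul_one, Module.End.one_apply]
    using mem_dahmenMicchelli.mp hq i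

lemma dirDeriv_mem_dahmenMicchelli (hs : 1 ≤ n s) (hq : q ∈ dahmenMicchelli n) :
    dirDeriv s q ∈ dahmenMicchelli (decr s n) := by
  rw [mem_dahmenMicchelli] at hq ⊢
  intro i
  obtain rfl | hsi := eq_or_ne s i
  · rw [transverseDeriv_decr_self, transverseDeriv_dirDeriv, hq, map_zero]
  · rw [transverseDeriv_decr_of_ne hsi hs, hq]

lemma mem_dahmenMicchelli_of_dirDeriv_mem (h : SpansPlane n)
    (hq : ∀ s, 1 ≤ n s → dirDeriv s q ∈ dahmenMicchelli (decr s n)) : q ∈ dahmenMicchelli n := by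
  refine mem_dahmenMicchelli.mpr fun i ↦ ?_
  obtain ⟨s, hsi, hs⟩ := exists_ne_of_transverse_pos (h i)
  rw [← transverseDeriv_decr_of_ne hsi hs]
  exact mem_dahmenMicchelli.mp (hq s hs) i

lemma translate_mem_dahmenMicchelli (v : Pt) (hq : q ∈ dahmenMicchelli n) :
    translate v q ∈ dahmenMicchelli n := by
  rw [mem_dahmenMicchelli] at hq ⊢
  exact fun i ↦ by rw [transverseDeriv_translate, hq, map_zero]

lemma boxCombination_mem_dahmenMicchelli (n : Fin 3 → ℕ) (τ : Bool) :
    ∀ a, boxCombination n τ a ∈ dahmenMicchelli n := by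
  induction n using decr_induction with
  | step n ih =>
    intro a
    by_cases h : SpansPlane n
    · refine mem_dahmenMicchelli_of_dirDeriv_mem h fun s hs ↦ ?_
      rw [dirDeriv_boxCombination hs]
      exact ih s hs _
    · rw [boxCombination_of_not_spansPlane h]
      exact zero_mem _

/-- A discrete antiderivative of `b`. -/
def antidifference (b : ℤ → ℝ) (k : ℤ) : ℝ :=
  ∑ j ∈ Finset.Ico k 0, b j - ∑ j ∈ Finset.Ico 0 k, b j

lemma antidifference_sub_add_one (b : ℤ → ℝ) (k : ℤ) :
    antidifference b k - antidifference b (k + 1) = b k := by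
  unfold antidifference
  rcases le_or_gt 0 k with hk | hk
  · rw [← Finset.insert_Ico_right_eq_Ico_add_one hk, Finset.sum_insert (by simp),
      Finset.Ico_eq_empty (a := k) (by omega),
      Finset.Ico_eq_empty (a := k + 1) (by omega)]
    ring
  · rw [← Finset.insert_Ico_add_one_left_eq_Ico hk, Finset.sum_insert (by simp),
      Finset.Ico_eq_empty (a := 0) (by omega), Finset.Ico_eq_empty (a := 0) (by omega)]
    ring

lemma exists_dual_functional (hst : s ≠ t) : ∃ φ : ℤ × ℤ →+ ℤ, φ (dirZ s) = 1 ∧ φ (dirZ t) = 0 := by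
  obtain ⟨a, b, h₁, h₂⟩ : ∃ a b : ℤ, a * (dirZ s).1 + b * (dirZ s).2 = 1 ∧
      a * (dirZ t).1 + b * (dirZ t).2 = 0 := by
    refine ⟨![![0, 1, 1], ![0, 0, -1], ![0, 1, 0]] s t,
      ![![0, 0, -1], ![1, 0, 1], ![1, 0, 0]] s t, ?_⟩
    revert s t; decide
  exact ⟨(AddMonoidHom.mulLeft a).coprod (AddMonoidHom.mulLeft b), by simpa using h₁,
    by simpa using h₂⟩

lemma exists_forall_sub_add_dirZ_eq (hst : s ≠ t) (b : ℤ × ℤ → ℝ) : ∃ a : ℤ × ℤ → ℝ,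
    (∀ u, a u - a (u + dirZ s) = b u) ∧
      ((∀ u, b (u + dirZ t) = b u) → ∀ u, a (u + dirZ t) = a u) := by
  obtain ⟨φ, hs, ht⟩ := exists_dual_functional hst
  refine ⟨fun u ↦ antidifference (fun k ↦ b (u + (k - φ u) • dirZ s)) (φ u), fun u ↦ ?_,
    fun hb u ↦ ?_⟩
  · have hline : (fun k ↦ b (u + dirZ s + (k - φ (u + dirZ s)) • dirZ s)) =
        fun k ↦ b (u + (k - φ u) • dirZ s) := by
      funext k
      rw [map_add, hs]
      congr 1
      module
    beta_reduce
    rw [hline, map_add, hs, antidifference_sub_add_one, sub_self, zero_smul, add_zero]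
  · have hline : (fun k ↦ b (u + dirZ t + (k - φ (u + dirZ t)) • dirZ s)) =
        fun k ↦ b (u + (k - φ u) • dirZ s) := by
      funext k
      rw [map_add, ht, add_zero, add_right_comm, hb]
    beta_reduce
    rw [hline, map_add, ht, add_zero]

lemma exists_eq_boxCombination_of_dirDeriv_eq_zero (τ : Bool) (s : Fin 3) (n : Fin 3 → ℕ) :
    1 ≤ n s → ∀ q ∈ dahmenMicchelli n, dirDeriv s q = 0 →
      ∃ a, q = boxCombination n τ a ∧ ∀ u, a (u + dirZ s) = a u := by
  induction n using decr_induction with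
  | step n ih =>
    intro hs q hq hds
    by_cases h : SpansPlane n
    swap
    · exact ⟨0, by rw [eq_zero_of_mem_dahmenMicchelli h hq, map_zero], fun _ ↦ rfl⟩
    obtain ⟨t, hts, ht⟩ := exists_ne_of_transverse_pos (h s)
    obtain ⟨b, hb, hinv⟩ := ih t ht (by rwa [decr_of_ne hts.symm]) _
      (dirDeriv_mem_dahmenMicchelli ht hq) (by rw [derivAlong_commute, hds, map_zero])
    obtain ⟨a, ha, hinv'⟩ := exists_forall_sub_add_dirZ_eq hts b
    have hdt : dirDeriv t (q - boxCombination n τ a) = 0 := by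
      simp only [map_sub, hb, dirDeriv_boxCombination ht, ha, sub_self]
    have hds' : dirDeriv s (q - boxCombination n τ a) = 0 := by
      simp only [map_sub, hds, dirDeriv_boxCombination hs, hinv' hinv, sub_self]
      rw [zero_sub, neg_eq_zero]
      exact map_zero (boxCombination (decr s n) τ)
    obtain ⟨κ, hκ⟩ := exists_eq_C_of_dirDeriv_eq_zero hts hdt hds'
    refine ⟨a + fun _ ↦ κ, ?_, fun u ↦ by simp only [Pi.add_apply, hinv' hinv]⟩
    rw [map_add, boxCombination_const h, ← hκ, add_sub_cancel]

lemma exists_eq_boxCombination (τ : Bool) (n : Fin 3 → ℕ) :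
    ∀ q ∈ dahmenMicchelli n, ∃ a, q = boxCombination n τ a := by
  induction n using decr_induction with
  | step n ih =>
    intro q hq
    by_cases h : SpansPlane n
    swap
    · exact ⟨0, by rw [eq_zero_of_mem_dahmenMicchelli h hq, map_zero]⟩
    obtain ⟨s, -, hs⟩ := exists_ne_of_transverse_pos (h 0)
    obtain ⟨t, hts, -⟩ := exists_ne_of_transverse_pos (h s)
    obtain ⟨b, hb⟩ := ih s hs _ (dirDeriv_mem_dahmenMicchelli hs hq)
    obtain ⟨a, ha, -⟩ := exists_forall_sub_add_dirZ_eq hts.symm b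
    obtain ⟨a', ha', -⟩ := exists_eq_boxCombination_of_dirDeriv_eq_zero τ s n hs
      (q - boxCombination n τ a) (sub_mem hq (boxCombination_mem_dahmenMicchelli n τ a))
      (by simp only [map_sub, hb, dirDeriv_boxCombination hs, ha, sub_self])
    exact ⟨a + a', by rw [map_add, ← ha', add_sub_cancel]⟩

end DahmenMicchelli

/-! ### Smooth gluing and divisibility -/

lemma hasDerivAt_max_zero_pow (k : ℕ) (x : ℝ) :
    HasDerivAt (fun x : ℝ ↦ max x 0 ^ (k + 2)) ((k + 2) * max x 0 ^ (k + 1)) x := by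
  refine hasDerivAt_of_hasDerivAt_of_ne' (x := 0) (g := fun x ↦ (k + 2) * max x 0 ^ (k + 1))
    (fun y hy ↦ ?_) (by fun_prop) (by fun_prop) x
  rcases hy.lt_or_gt with hneg | hpos
  · rw [max_eq_right hneg.le, zero_pow k.succ_ne_zero, mul_zero]
    refine (hasDerivAt_const y (0 : ℝ)).congr_of_eventuallyEq ?_
    filter_upwards [Iio_mem_nhds hneg] with z hz
    rw [max_eq_right (le_of_lt hz), zero_pow (by omega)]
  · rw [max_eq_left hpos.le]
    have hpow : HasDerivAt (fun x : ℝ ↦ x ^ (k + 2)) ((k + 2) * y ^ (k + 1)) y := by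
      simpa using hasDerivAt_pow (k + 2) y
    refine hpow.congr_of_eventuallyEq ?_
    filter_upwards [Ioi_mem_nhds hpos] with z hz
    rw [max_eq_left (le_of_lt hz)]

lemma contDiff_max_zero_pow (d : ℕ) : ContDiff ℝ d fun x : ℝ ↦ max x 0 ^ (d + 1) := by
  induction d with
  | zero =>
    rw [Nat.cast_zero, contDiff_zero]
    fun_prop
  | succ d ih =>
    rw [Nat.cast_succ, contDiff_succ_iff_deriv]
    refine ⟨fun x ↦ (hasDerivAt_max_zero_pow d x).differentiableAt, by simp, ?_⟩
    rw [_root_.funext fun x ↦ (hasDerivAt_max_zero_pow d x).deriv]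
    exact contDiff_const.mul ih

section Gluing

variable {ℓ f f' : BPoly} {w : Pt} {O : Set Pt} {d : ℕ}

lemma exists_contDiff_eq_of_pow_dvd_sub (h : ℓ ^ (d + 1) ∣ f - f') :
    ∃ g : Pt → ℝ, ContDiff ℝ d g ∧ (∀ p, 0 ≤ evalP ℓ p → g p = evalP f p) ∧
      ∀ p, evalP ℓ p ≤ 0 → g p = evalP f' p := by
  obtain ⟨r, hr⟩ := h
  rw [sub_eq_iff_eq_add'] at hr
  refine ⟨fun p ↦ evalP f' p + max (evalP ℓ p) 0 ^ (d + 1) * evalP r p,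
    (contDiff_evalP f').add (((contDiff_max_zero_pow d).comp (contDiff_evalP ℓ)).mul
      (contDiff_evalP r)), fun p hp ↦ ?_, fun p hp ↦ ?_⟩
  · simp only [max_eq_left hp, hr, evalP_add, evalP_mul, evalP_pow]
  · simp only [max_eq_right hp, zero_pow d.succ_ne_zero, zero_mul, add_zero]

lemma inter_nonneg_subset_closure (hw : derivAlong w ℓ = 1) (hO : IsOpen O) :
    O ∩ {p | 0 ≤ evalP ℓ p} ⊆ closure (O ∩ {p | 0 < evalP ℓ p}) := by
  rintro p ⟨hpO, hp⟩
  have hlim : Filter.Tendsto (fun t : ℝ ↦ p + t • w) (nhdsWithin 0 (Ioi 0)) (nhds p) := by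
    have hcont : Continuous fun t : ℝ ↦ p + t • w := by fun_prop
    simpa using (hcont.tendsto 0).mono_left nhdsWithin_le_nhds
  refine mem_closure_of_tendsto hlim ?_
  filter_upwards [hlim.eventually (hO.mem_nhds hpO), self_mem_nhdsWithin] with t htO ht
  refine ⟨htO, ?_⟩
  rw [mem_ofPred_eq, evalP_line_of_derivAlong_eq_one hw]
  exact add_pos_of_nonneg_of_pos hp ht

lemma eq_evalP_of_continuousOn {h : Pt → ℝ} {p : Pt} (hw : derivAlong w ℓ = 1) (hO : IsOpen O)
    (hh : ContinuousOn h O) (heq : EqOn h (evalP f) (O ∩ {p | 0 < evalP ℓ p})) (hp : p ∈ O)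
    (hℓ : evalP ℓ p = 0) : h p = evalP f p :=
  heq.of_subset_closure (t := O ∩ {p | 0 ≤ evalP ℓ p}) (hh.mono inter_subset_left)
    (continuous_evalP f).continuousOn
    (inter_subset_inter_right _ (ofPred_subset_ofPred.mpr fun _ ↦ le_of_lt))
    (inter_nonneg_subset_closure hw hO)
    ⟨hp, hℓ.ge⟩

lemma dvd_sub_of_continuousOn {h : Pt → ℝ} (hw : derivAlong w ℓ = 1) (hO : IsOpen O)
    (hne : ∃ p ∈ O, evalP ℓ p = 0) (hh : ContinuousOn h O)
    (hf : EqOn h (evalP f) (O ∩ {p | 0 < evalP ℓ p}))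
    (hf' : EqOn h (evalP f') (O ∩ {p | evalP ℓ p < 0})) : ℓ ∣ f - f' := by
  have hneg : derivAlong (-w) (-ℓ) = 1 := by
    simp only [derivAlong_apply] at hw ⊢
    rw [← hw]
    simp
  refine dvd_of_forall_evalP_eq_zero hw hO hne fun p hp hℓ ↦ ?_
  rw [evalP_sub, ← eq_evalP_of_continuousOn hw hO hh hf hp hℓ, sub_eq_zero]
  exact eq_evalP_of_continuousOn hneg hO hh (by simpa using hf') hp (by simpa using hℓ)

lemma pow_succ_dvd_sub_of_contDiffOn (hw : derivAlong w ℓ = 1) (hO : IsOpen O)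
    (hne : ∃ p ∈ O, evalP ℓ p = 0) {h : Pt → ℝ} (hh : ContDiffOn ℝ d h O)
    (hf : EqOn h (evalP f) (O ∩ {p | 0 < evalP ℓ p}))
    (hf' : EqOn h (evalP f') (O ∩ {p | evalP ℓ p < 0})) : ℓ ^ (d + 1) ∣ f - f' := by
  have hbase := dvd_sub_of_continuousOn hw hO hne hh.continuousOn hf hf'
  induction d generalizing h f f' with
  | zero => rwa [zero_add, pow_one]
  | succ d ih =>
    have hfderiv {q : BPoly} {U : Set Pt} (hU : IsOpen U) (heq : EqOn h (evalP q) U) :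
        EqOn (fun p ↦ fderiv ℝ h p w) (evalP (derivAlong w q)) U := fun p hp ↦ by
      beta_reduce
      rw [← fderiv_evalP, (heq.eventuallyEq_of_mem (hU.mem_nhds hp)).fderiv_eq]
    have hpos := hfderiv (hO.inter (isOpen_lt continuous_const (continuous_evalP ℓ))) hf
    have hneg := hfderiv (hO.inter (isOpen_lt (continuous_evalP ℓ) continuous_const)) hf'
    rw [Nat.cast_succ, contDiffOn_succ_iff_fderiv_of_isOpen hO] at hh
    have hderiv := hh.2.2.clm_apply (contDiffOn_const (c := w))
    have hℓ : ℓ ≠ 0 := fun h₀ ↦ by simp [h₀] at hw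
    refine pow_succ_dvd_of_pow_dvd_derivation hℓ one_ne_zero (by rw [hw, C_1]) hbase ?_
    rw [map_sub]
    exact ih hderiv hpos hneg (dvd_sub_of_continuousOn hw hO hne hderiv.continuousOn hpos hneg)

end Gluing

/-! ### Spline spaces on the two triangles at an edge -/

/-- The triangle of orientation `τ` that has `ε` as an edge. -/
def edgeTriangle (ε : Edge) (τ : Bool) : Tri := ⟨ε.1 - edgeShift ε.2 τ, τ⟩

/-- The affine equation of the line through `ε`, positive on the lower triangle at `ε`. -/
def edgeLine (ε : Edge) : BPoly := translate (-latticePt ε.1) (edgeForm ε.2)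

/-- The open parallelogram spanned by the two triangles at `ε`. -/
def edgeNhd (ε : Edge) : Set Pt :=
  (· - latticePt ε.1) ⁻¹' ![{p | 0 < p.1 ∧ p.1 < 1 ∧ p.1 - 1 < p.2 ∧ p.2 < p.1},
    {p | 0 < p.2 ∧ p.2 < 1 ∧ p.2 - 1 < p.1 ∧ p.1 < p.2},
    {p | 0 < p.1 ∧ p.1 < 1 ∧ 0 < p.2 ∧ p.2 < 1}] ε.2

section EdgeGeometry

variable {ε ε' : Edge} {T : Tri} {f f' : BPoly}

lemma mem_edges_iff : ε ∈ T.edges ↔ T = edgeTriangle ε T.up := by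
  obtain ⟨⟨a, b⟩, τ⟩ := T
  obtain ⟨⟨x, y⟩, i⟩ := ε
  fin_cases i <;> cases τ <;> simp [Tri.edges, edgeTriangle, edgeShift] <;> omega

lemma mem_edges_edgeTriangle (ε : Edge) (τ : Bool) : ε ∈ (edgeTriangle ε τ).edges :=
  mem_edges_iff.mpr rfl

lemma eq_of_mem_edges_of_mem_edges (h : ε' ∈ (edgeTriangle ε false).edges)
    (h' : ε' ∈ (edgeTriangle ε true).edges) : ε' = ε := by
  obtain ⟨⟨a, b⟩, j⟩ := ε'
  obtain ⟨⟨x, y⟩, i⟩ := ε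
  rw [mem_edges_iff] at h h'
  fin_cases i <;> fin_cases j <;> simp [edgeTriangle, edgeShift] at h h' ⊢ <;> omega

lemma evalP_edgeLine (ε : Edge) (p : Pt) :
    evalP (edgeLine ε) p = evalP (edgeForm ε.2) (p - latticePt ε.1) := by
  rw [edgeLine, evalP_translate, sub_eq_add_neg]

lemma isOpen_edgeNhd (ε : Edge) : IsOpen (edgeNhd ε) := by
  obtain ⟨v, i⟩ := ε
  refine IsOpen.preimage (by fun_prop) ?_
  fin_cases i <;> exact (isOpen_lt (by fun_prop) (by fun_prop)).and
    ((isOpen_lt (by fun_prop) (by fun_prop)).and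
      ((isOpen_lt (by fun_prop) (by fun_prop)).and (isOpen_lt (by fun_prop) (by fun_prop))))

lemma exists_mem_edgeNhd_evalP_edgeLine_eq_zero (ε : Edge) :
    ∃ p ∈ edgeNhd ε, evalP (edgeLine ε) p = 0 := by
  obtain ⟨v, i⟩ := ε
  refine ⟨(1 / 2 : ℝ) • dirR i + latticePt v, ?_, ?_⟩
  · fin_cases i <;> norm_num [edgeNhd, dirR, dirZ, latticePt]
  · rw [evalP_edgeLine, add_sub_cancel_right, evalP_edgeForm_smul_dirR]

lemma edgeNhd_inter_pos_subset (ε : Edge) :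
    edgeNhd ε ∩ {p | 0 < evalP (edgeLine ε) p} ⊆ (edgeTriangle ε false).toSet := by
  obtain ⟨v, i⟩ := ε
  rintro p ⟨hp, hpos⟩
  rw [mem_ofPred_eq, evalP_edgeLine] at hpos
  fin_cases i <;> simp [edgeNhd, edgeForm, edgeTriangle, edgeShift, Tri.toSet, latticePt] at * <;>
    grind

lemma edgeNhd_inter_neg_subset (ε : Edge) :
    edgeNhd ε ∩ {p | evalP (edgeLine ε) p < 0} ⊆ (edgeTriangle ε true).toSet := by
  obtain ⟨v, i⟩ := ε
  rintro p ⟨hp, hneg⟩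
  rw [mem_ofPred_eq, evalP_edgeLine] at hneg
  fin_cases i <;> simp [edgeNhd, edgeForm, edgeTriangle, edgeShift, Tri.toSet, latticePt] at * <;>
    grind

lemma cl_edgeTriangle_false_subset (ε : Edge) :
    (edgeTriangle ε false).cl ⊆ {p | 0 ≤ evalP (edgeLine ε) p} := by
  refine closure_minimal (fun p hp ↦ ?_) (isClosed_le continuous_const (continuous_evalP _))
  obtain ⟨v, i⟩ := ε
  rw [mem_ofPred_eq, evalP_edgeLine]
  fin_cases i <;> simp [edgeForm, edgeTriangle, edgeShift, Tri.toSet, latticePt] at * <;> linarith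

lemma cl_edgeTriangle_true_subset (ε : Edge) :
    (edgeTriangle ε true).cl ⊆ {p | evalP (edgeLine ε) p ≤ 0} := by
  refine closure_minimal (fun p hp ↦ ?_) (isClosed_le (continuous_evalP _) continuous_const)
  obtain ⟨v, i⟩ := ε
  rw [mem_ofPred_eq, evalP_edgeLine]
  fin_cases i <;> simp [edgeForm, edgeTriangle, edgeShift, Tri.toSet, latticePt] at * <;> linarith

lemma exists_derivAlong_edgeLine_eq_one (ε : Edge) : ∃ w, derivAlong w (edgeLine ε) = 1 := by
  obtain ⟨w, hw⟩ := exists_derivAlong_edgeForm_eq_one ε.2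
  exact ⟨w, by rw [edgeLine, derivAlong_translate, hw, map_one]⟩

lemma edgeNhd_subset_union_cl (ε : Edge) :
    edgeNhd ε ⊆ (edgeTriangle ε false).cl ∪ (edgeTriangle ε true).cl := by
  obtain ⟨w, hw⟩ := exists_derivAlong_edgeLine_eq_one ε
  intro p hp
  rcases le_or_gt 0 (evalP (edgeLine ε) p) with hnonneg | hneg
  · exact .inl (closure_mono (edgeNhd_inter_pos_subset ε)
      (inter_nonneg_subset_closure hw (isOpen_edgeNhd ε) ⟨hp, hnonneg⟩))
  · exact .inr (subset_closure (edgeNhd_inter_neg_subset ε ⟨hp, hneg⟩))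

lemma diamond_pair (T T' : Tri) (ε : Edge) : diamond {T, T'} ε =
    {p | (ε ∈ T.edges ∧ p ∈ T.cl) ∨ (ε ∈ T'.edges ∧ p ∈ T'.cl)} := by
  ext p
  simp [diamond, and_assoc, or_and_right, exists_or]

lemma edgeLine_pow_dvd_of_mem_splineSpace {V : Set BPoly} {d : Fin 3 → ℕ} {g : Pt → ℝ}
    (hg : g ∈ SplineSpace {edgeTriangle ε false, edgeTriangle ε true} V d)
    (hf : EqOn g (evalP f) (edgeTriangle ε false).toSet)
    (hf' : EqOn g (evalP f') (edgeTriangle ε true).toSet) :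
    edgeLine ε ^ (d ε.2 + 1) ∣ f - f' := by
  obtain ⟨w, hw⟩ := exists_derivAlong_edgeLine_eq_one ε
  have hsmooth := hg.2 ε ⟨edgeTriangle ε false, by simp, mem_edges_edgeTriangle ε false⟩
  simp only [diamond_pair, mem_edges_edgeTriangle, true_and] at hsmooth
  exact pow_succ_dvd_sub_of_contDiffOn hw (isOpen_edgeNhd ε)
    (exists_mem_edgeNhd_evalP_edgeLine_eq_zero ε) (hsmooth.mono (edgeNhd_subset_union_cl ε))
    (hf.mono (edgeNhd_inter_pos_subset ε)) (hf'.mono (edgeNhd_inter_neg_subset ε))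

lemma exists_mem_splineSpace_of_edgeLine_pow_dvd {V : Set BPoly} {d : Fin 3 → ℕ} (hV : f ∈ V)
    (hV' : f' ∈ V) (h : edgeLine ε ^ (d ε.2 + 1) ∣ f - f') :
    ∃ g ∈ SplineSpace {edgeTriangle ε false, edgeTriangle ε true} V d,
      EqOn g (evalP f) (edgeTriangle ε false).toSet ∧
        EqOn g (evalP f') (edgeTriangle ε true).toSet := by
  obtain ⟨g, hg, hpos, hneg⟩ := exists_contDiff_eq_of_pow_dvd_sub h
  have hlower : EqOn g (evalP f) (edgeTriangle ε false).cl :=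
    fun p hp ↦ hpos p (cl_edgeTriangle_false_subset ε hp)
  have hupper : EqOn g (evalP f') (edgeTriangle ε true).cl :=
    fun p hp ↦ hneg p (cl_edgeTriangle_true_subset ε hp)
  refine ⟨g, ⟨⟨hg.continuous.continuousOn, ?_⟩, fun ε' _ ↦ ?_⟩, hlower.mono subset_closure,
    hupper.mono subset_closure⟩
  · simp only [Finset.mem_insert, Finset.mem_singleton, forall_eq_or_imp, forall_eq]
    exact ⟨⟨f, hV, hlower.mono subset_closure⟩, ⟨f', hV', hupper.mono subset_closure⟩⟩
  rw [diamond_pair]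
  by_cases hε : ε' ∈ (edgeTriangle ε false).edges
  · by_cases hε' : ε' ∈ (edgeTriangle ε true).edges
    · rw [eq_of_mem_edges_of_mem_edges hε hε']
      exact hg.contDiffOn
    · exact (contDiff_evalP f).contDiffOn.congr fun p hp ↦
        hlower (hp.resolve_right fun h ↦ hε' h.1).2
  · exact (contDiff_evalP f').contDiffOn.congr fun p hp ↦
      hupper (hp.resolve_left fun h ↦ hε h.1).2

end EdgeGeometry

/-! ### Coefficients of the box spline translates -/

lemma translate_translate (u v : Pt) (q : BPoly) :
    translate u (translate v q) = translate (u + v) q := by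
  refine evalP_injective (_root_.funext fun p ↦ ?_)
  rw [evalP_translate, evalP_translate, evalP_translate, add_assoc]

lemma translate_zero (q : BPoly) : translate 0 q = q :=
  evalP_injective (_root_.funext fun p ↦ by rw [evalP_translate, add_zero])

lemma translate_dvd_translate_iff (v : Pt) {q r : BPoly} :
    translate v q ∣ translate v r ↔ q ∣ r := by
  refine ⟨fun h ↦ ?_, map_dvd (translate v)⟩
  simpa only [translate_translate, neg_add_cancel, translate_zero] using map_dvd (translate (-v)) h

lemma edgeLine_pow_dvd_iff {ε : Edge} {k : ℕ} {q : BPoly} :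
    edgeLine ε ^ k ∣ q ↔ edgeForm ε.2 ^ k ∣ translate (latticePt ε.1) q := by
  rw [← translate_dvd_translate_iff (latticePt ε.1), map_pow, edgeLine, translate_translate,
    add_neg_cancel, translate_zero]

lemma sub_latticePt_mem_toSet_iff {T : Tri} {p : Pt} :
    p - latticePt T.v ∈ Tri.toSet ⟨0, T.up⟩ ↔ p ∈ T.toSet := by
  obtain ⟨v, τ⟩ := T
  cases τ <;> simp [Tri.toSet, latticePt, sub_lt_iff_lt_add']

lemma isOpen_toSet (T : Tri) : IsOpen T.toSet := by
  obtain ⟨v, τ⟩ := T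
  cases τ <;> exact (isOpen_lt (by fun_prop) (by fun_prop)).and
    ((isOpen_lt (by fun_prop) (by fun_prop)).and (isOpen_lt (by fun_prop) (by fun_prop)))

lemma toSet_nonempty (T : Tri) : T.toSet.Nonempty := by
  obtain ⟨v, τ⟩ := T
  cases τ
  · exact ⟨(v.1 + 2 / 3, v.2 + 1 / 3), by norm_num [Tri.toSet]⟩
  · exact ⟨(v.1 + 1 / 3, v.2 + 2 / 3), by norm_num [Tri.toSet]⟩

section Coefficients

variable {n₁ n₂ n₃ : ℕ} {T : Tri} {f : BPoly} {c : (ℤ × ℤ) →₀ ℝ} {w : ℤ × ℤ}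

lemma trBox_eq_evalP (h₁ : 1 ≤ n₁) (h₂ : 1 ≤ n₂) (h₃ : 1 ≤ n₃) (w : ℤ × ℤ) {p : Pt}
    (hp : p ∈ T.toSet) : trBox n₁ n₂ n₃ w p =
      evalP (translate (-latticePt T.v) (boxPieces ![n₁, n₂, n₃] (T.v - w) T.up)) p := by
  obtain ⟨a, rfl⟩ := Nat.exists_eq_add_of_le' h₁
  obtain ⟨b, rfl⟩ := Nat.exists_eq_add_of_le' h₂
  obtain ⟨c, rfl⟩ := Nat.exists_eq_add_of_le' h₃
  rw [evalP_translate, ← sub_eq_add_neg,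
    ← hasPieces_boxN a b c _ _ _ (sub_latticePt_mem_toSet_iff.mpr hp), latticePt_sub,
    sub_add_sub_cancel]
  rfl

lemma mem_activeSet_iff (h₁ : 1 ≤ n₁) (h₂ : 1 ≤ n₂) (h₃ : 1 ≤ n₃) :
    w ∈ activeSet n₁ n₂ n₃ T ↔ boxPieces ![n₁, n₂, n₃] (T.v - w) T.up ≠ 0 := by
  refine not_congr ⟨fun h ↦ ?_, fun h p hp ↦ ?_⟩
  · have hzero : translate (-latticePt T.v) (boxPieces ![n₁, n₂, n₃] (T.v - w) T.up) = 0 :=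
      eq_of_eqOn_isOpen (isOpen_toSet T) (toSet_nonempty T) fun p hp ↦ by
        rw [← trBox_eq_evalP h₁ h₂ h₃ w hp, h p hp, evalP_zero]
    rw [← translate_zero (boxPieces _ _ _), ← add_neg_cancel (latticePt T.v),
      ← translate_translate, hzero, map_zero]
  · rw [trBox_eq_evalP h₁ h₂ h₃ w hp, h, map_zero, evalP_zero]

lemma finsuppSum_trBox_eq_evalP (h₁ : 1 ≤ n₁) (h₂ : 1 ≤ n₂) (h₃ : 1 ≤ n₃) {p : Pt}
    (hp : p ∈ T.toSet) : (c.sum fun w a ↦ a * trBox n₁ n₂ n₃ w p) =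
      evalP (translate (-latticePt T.v)
        (boxCombination ![n₁, n₂, n₃] T.up fun u ↦ c (T.v - u))) p := by
  have hsubst : boxCombination ![n₁, n₂, n₃] T.up (fun u ↦ c (T.v - u)) =
      c.sum fun w a ↦ a • boxPieces ![n₁, n₂, n₃] (T.v - w) T.up := by
    rw [boxCombination_apply, Finsupp.sum, ← finsum_comp_equiv (Equiv.subLeft T.v)]
    simp only [Equiv.subLeft_apply, sub_sub_cancel]
    exact finsum_eq_sum_of_support_subset _ fun w hw ↦
      Finsupp.mem_support_iff.mpr (left_ne_zero_of_smul hw)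
  rw [hsubst, Finsupp.sum, Finsupp.sum, map_sum, evalP_sum]
  exact Finset.sum_congr rfl fun w _ ↦ by
    rw [map_smul, evalP_smul, trBox_eq_evalP h₁ h₂ h₃ w hp]

lemma eq_translate_boxCombination_of_represents (h₁ : 1 ≤ n₁) (h₂ : 1 ≤ n₂) (h₃ : 1 ≤ n₃)
    (h : Represents n₁ n₂ n₃ T f c) : f = translate (-latticePt T.v)
      (boxCombination ![n₁, n₂, n₃] T.up fun u ↦ c (T.v - u)) :=
  eq_of_eqOn_isOpen (isOpen_toSet T) (toSet_nonempty T) fun p hp ↦ by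
    rw [h.2 p hp, finsuppSum_trBox_eq_evalP h₁ h₂ h₃ hp]

open Classical in
lemma translate_boxCombination_mem_VSpace (h₁ : 1 ≤ n₁) (h₂ : 1 ≤ n₂) (h₃ : 1 ≤ n₃) (T : Tri)
    (a : ℤ × ℤ → ℝ) :
    translate (-latticePt T.v) (boxCombination ![n₁, n₂, n₃] T.up a) ∈ VSpace n₁ n₂ n₃ T := by
  have hfin : (activeSet n₁ n₂ n₃ T).Finite :=
    ((support_boxPieces_finite ![n₁, n₂, n₃] T.up).preimage
      (f := (T.v - ·)) sub_right_injective.injOn).subset fun w hw ↦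
        (mem_activeSet_iff h₁ h₂ h₃).mp hw
  set c : (ℤ × ℤ) →₀ ℝ := Finsupp.onFinset hfin.toFinset
    (fun w ↦ if w ∈ activeSet n₁ n₂ n₃ T then a (T.v - w) else 0)
    (fun w hw ↦ hfin.mem_toFinset.mpr (of_not_not fun hnot ↦ hw (if_neg hnot))) with hc
  refine ⟨c, fun w hw ↦ ?_, fun p hp ↦ ?_⟩
  · by_contra hnot
    simp [hc, hnot] at hw
  · rw [finsuppSum_trBox_eq_evalP h₁ h₂ h₃ hp]
    congr 2
    refine boxCombination_congr fun u hu ↦ ?_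
    have hactive : T.v - u ∈ activeSet n₁ n₂ n₃ T :=
      (mem_activeSet_iff h₁ h₂ h₃).mpr (by rwa [sub_sub_cancel])
    simp [hc, hactive]

lemma VSpace_eq_dahmenMicchelli (h₁ : 1 ≤ n₁) (h₂ : 1 ≤ n₂) (h₃ : 1 ≤ n₃) (T : Tri) :
    VSpace n₁ n₂ n₃ T = dahmenMicchelli ![n₁, n₂, n₃] := by
  refine Subset.antisymm ?_ fun f hf ↦ ?_
  · rintro f ⟨c, hc⟩
    rw [eq_translate_boxCombination_of_represents h₁ h₂ h₃ hc]
    exact translate_mem_dahmenMicchelli _ (boxCombination_mem_dahmenMicchelli _ _ _)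
  · obtain ⟨a, ha⟩ := exists_eq_boxCombination T.up _ _
      (translate_mem_dahmenMicchelli (latticePt T.v) hf)
    rw [← translate_zero f, ← neg_add_cancel (latticePt T.v), ← translate_translate, ha]
    exact translate_boxCombination_mem_VSpace h₁ h₂ h₃ T a

lemma translate_eq_edgeCombination {ε : Edge} {τ : Bool} (h₁ : 1 ≤ n₁) (h₂ : 1 ≤ n₂)
    (h₃ : 1 ≤ n₃) (h : Represents n₁ n₂ n₃ (edgeTriangle ε τ) f c) :
    translate (latticePt ε.1) f =
      edgeCombination ε.2 τ ![n₁, n₂, n₃] fun u ↦ c (ε.1 - u) := by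
  rw [eq_translate_boxCombination_of_represents h₁ h₂ h₃ h, translate_translate, edgeTriangle,
    latticePt_sub, edgeCombination_apply]
  simp only [neg_sub, add_sub_cancel, sub_add_eq_sub_sub_swap]

end Coefficients

section EdgeContact

variable {n₁ n₂ n₃ : ℕ} {ε : Edge} {f f' : BPoly} {c c' : (ℤ × ℤ) →₀ ℝ}

lemma smoothness_add_one_eq (h₁ : 1 ≤ n₁) (h₂ : 1 ≤ n₂) (h₃ : 1 ≤ n₃) (i : Fin 3) :
    ![n₂ + n₃ - 2, n₁ + n₃ - 2, n₁ + n₂ - 2] i + 1 = transverse ![n₁, n₂, n₃] i - 1 := by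
  fin_cases i <;> simp [transverse] <;> omega

lemma edgeLine_pow_dvd_sub_iff (h₁ : 1 ≤ n₁) (h₂ : 1 ≤ n₂) (h₃ : 1 ≤ n₃)
    (hc : Represents n₁ n₂ n₃ (edgeTriangle ε false) f c)
    (hc' : Represents n₁ n₂ n₃ (edgeTriangle ε true) f' c') :
    edgeLine ε ^ (![n₂ + n₃ - 2, n₁ + n₃ - 2, n₁ + n₂ - 2] ε.2 + 1) ∣ f - f' ↔
      ∀ w ∈ activeSet n₁ n₂ n₃ (edgeTriangle ε false) ∩ activeSet n₁ n₂ n₃ (edgeTriangle ε true),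
        c w = c' w := by
  rw [smoothness_add_one_eq h₁ h₂ h₃, edgeLine_pow_dvd_iff, map_sub,
    translate_eq_edgeCombination h₁ h₂ h₃ hc, translate_eq_edgeCombination h₁ h₂ h₃ hc',
    edgeForm_pow_dvd_iff, (Equiv.subLeft ε.1).forall_congr_left]
  refine forall_congr' fun w ↦ ?_
  simp [Bool.forall_bool, mem_activeSet_iff h₁ h₂ h₃, edgeTriangle, sub_right_comm,
    neg_add_eq_sub]

lemma exists_mem_splineSpace_iff (h₁ : 1 ≤ n₁) (h₂ : 1 ≤ n₂) (h₃ : 1 ≤ n₃) {V : Set BPoly}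
    (hV : f ∈ V) (hV' : f' ∈ V) (hc : Represents n₁ n₂ n₃ (edgeTriangle ε false) f c)
    (hc' : Represents n₁ n₂ n₃ (edgeTriangle ε true) f' c') :
    (∃ g ∈ SplineSpace {edgeTriangle ε false, edgeTriangle ε true} V
        ![n₂ + n₃ - 2, n₁ + n₃ - 2, n₁ + n₂ - 2],
      EqOn g (evalP f) (edgeTriangle ε false).toSet ∧
        EqOn g (evalP f') (edgeTriangle ε true).toSet) ↔
    ∀ w ∈ activeSet n₁ n₂ n₃ (edgeTriangle ε false) ∩ activeSet n₁ n₂ n₃ (edgeTriangle ε true),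
      c w = c' w := by
  rw [← edgeLine_pow_dvd_sub_iff h₁ h₂ h₃ hc hc']
  exact ⟨fun ⟨_, hg, hf, hf'⟩ ↦ edgeLine_pow_dvd_of_mem_splineSpace hg hf hf',
    exists_mem_splineSpace_of_edgeLine_pow_dvd hV hV'⟩

end EdgeContact

end BoxSpline

/-- edge-contact characterization.  Let `△, △'` be triangles
of `G` whose closures intersect in an edge (of some type), `M = △̂ ∪ △̂'`, and
let `f, f' ∈ V_n` with coefficient vectors `c, c'`.  The piecewise function
equal to `f` on `△` and to `f'` on `△'` belongs to `S^{d(n)}(M, V_n)` iff the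
coefficients of `f` and `f'` agree on all common active translates. -/
theorem statement2 (n₁ n₂ n₃ : ℕ) (h₁ : 1 ≤ n₁) (h₂ : 1 ≤ n₂) (h₃ : 1 ≤ n₃)
    (T T' : Tri) (hTT' : T ≠ T') (ε : Edge) (hT : ε ∈ T.edges) (hT' : ε ∈ T'.edges)
    (f f' : BPoly) (c c' : (ℤ × ℤ) →₀ ℝ)
    (hc : Represents n₁ n₂ n₃ T f c) (hc' : Represents n₁ n₂ n₃ T' f' c') :
    (∃ g ∈ SplineSpace {T, T'} (VSpace n₁ n₂ n₃ T)
        ![n₂ + n₃ - 2, n₁ + n₃ - 2, n₁ + n₂ - 2],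
      EqOn g (evalP f) T.toSet ∧ EqOn g (evalP f') T'.toSet) ↔
    ∀ w ∈ activeSet n₁ n₂ n₃ T ∩ activeSet n₁ n₂ n₃ T', c w = c' w := by
  have hV : VSpace n₁ n₂ n₃ T = VSpace n₁ n₂ n₃ T' := by
    rw [BoxSpline.VSpace_eq_dahmenMicchelli h₁ h₂ h₃, BoxSpline.VSpace_eq_dahmenMicchelli h₁ h₂ h₃]
  have hf : f ∈ VSpace n₁ n₂ n₃ T := ⟨c, hc⟩
  have hf' : f' ∈ VSpace n₁ n₂ n₃ T := hV ▸ ⟨c', hc'⟩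
  generalize VSpace n₁ n₂ n₃ T = V at hf hf'
  rw [BoxSpline.mem_edges_iff] at hT hT'
  cases hup : T.up <;> cases hup' : T'.up <;> rw [hup] at hT <;> rw [hup'] at hT' <;> subst T T'
  · exact absurd rfl hTT'
  · exact BoxSpline.exists_mem_splineSpace_iff h₁ h₂ h₃ hf hf' hc hc'
  · have hswap := BoxSpline.exists_mem_splineSpace_iff h₁ h₂ h₃ hf' hf hc' hc
    simpa only [Finset.pair_comm, inter_comm, and_comm, eq_comm] using hswap
  · exact absurd rfl hTT'

end
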